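/- Local limit theorem, dimension 1, stationary environment: if both 1/c and c̄ are μ-integrable, then for μ-a.e. ω and every even integer x₀: lim_{n→∞} √(2n)·P_0^ω[S_{2n}=x₀] = (c̄(x₀)(ω)/√π)·√(∫(1/c)dμ / ∫c̄ dμ). -/

import Mathlib

open MeasureTheory Filter
open scoped BigOperators ENNReal

/-- `cbar κ x = c(x−1,x) + c(x,x+1)`, where `κ x` denotes the conductance of
the edge `{x, x+1}` of `ℤ`. -/
noncomputable def cbar (κ : ℤ → ℝ) (x : ℤ) : ℝ := κ (x - 1) + κ x

/-- One-step transition probabilities of the nearest-neighbour conductance walk. -/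
noncomputable def step (κ : ℤ → ℝ) (x y : ℤ) : ℝ :=
  if y = x + 1 then κ x / cbar κ x
  else if y = x - 1 then κ (x - 1) / cbar κ x else 0

/-- `walk κ n x y = P_x[S_n = y]`, the `n`-step transition probabilities. -/
noncomputable def walk (κ : ℤ → ℝ) : ℕ → ℤ → ℤ → ℝ
  | 0, x, y => if y = x then 1 else 0
  | (n+1), x, y =>
      walk κ n x (y - 1) * step κ (y - 1) y + walk κ n x (y + 1) * step κ (y + 1) y

/-- The heat kernel `h_n(x) = P_0[S_n = x] / c̄(x)`. -/
noncomputable def heatK (κ : ℤ → ℝ) (n : ℕ) (x : ℤ) : ℝ := walk κ n 0 x / cbar κ x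

/-- The energy `‖h_n‖² = Σ_x h_n(x)² c̄(x)`. -/
noncomputable def energy (κ : ℤ → ℝ) (n : ℕ) : ℝ :=
  ∑' x : ℤ, (heatK κ n x) ^ 2 * cbar κ x

/-- The stationary environment of conductances seen from `ω`:
`c(x,x+1)(ω) = c(Tˣ ω)`. -/
noncomputable def envC {Ω : Type*} (T : Equiv.Perm Ω) (c : Ω → ℝ) (ω : Ω) : ℤ → ℝ :=
  fun x => c ((T ^ x) ω)

/-- running maximum of ergodic sums -/
noncomputable def runMax {Ω : Type*} (T : Ω → Ω) (f : Ω → ℝ) : ℕ → Ω → ℝ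
  | 0, _ => 0
  | (n+1), x => max 0 (f x + runMax T f n (T x))

lemma runMax_nonneg {Ω : Type*} (T : Ω → Ω) (f : Ω → ℝ) (n : ℕ) (x : Ω) : 0 ≤ runMax T f n x := by
  cases n <;> simp [runMax]

lemma runMax_mono {Ω : Type*} (T : Ω → Ω) (f : Ω → ℝ) (n : ℕ) (x : Ω) :
    runMax T f n x ≤ runMax T f (n+1) x := by
  induction n generalizing x with
  | zero => simp [runMax]
  | succ n ih =>
    rw [runMax, runMax]
    exact max_le_max le_rfl (by linarith [ih (T x)])

lemma sum_le_runMax {Ω : Type*} (T : Ω → Ω) (f : Ω → ℝ) (n : ℕ) (x : Ω) :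
    ∑ k ∈ Finset.range n, f (T^[k] x) ≤ runMax T f n x := by
  induction n generalizing x with
  | zero => simp [runMax]
  | succ n ih =>
    rw [runMax, Finset.sum_range_succ']
    refine le_max_of_le_right ?_
    have := ih (T x)
    simp only [Function.iterate_succ, Function.comp_apply, Function.iterate_zero, id] at *
    linarith

lemma runMax_integrable {Ω : Type*} [MeasurableSpace Ω] {μ : Measure Ω} {T : Ω → Ω}
    (hT : MeasurePreserving T μ μ) {f : Ω → ℝ} (hf : Integrable f μ) (n : ℕ) :
    Integrable (runMax T f n) μ := by
  induction n with
  | zero => exact integrable_zero _ _ _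
  | succ n ih =>
    exact (integrable_zero Ω ℝ μ).sup (hf.add (hT.integrable_comp_of_integrable ih))

lemma runMax_measurable {Ω : Type*} [MeasurableSpace Ω] {T : Ω → Ω}
    (hT : Measurable T) {f : Ω → ℝ} (hf : Measurable f) (n : ℕ) :
    Measurable (runMax T f n) := by
  induction n with
  | zero => exact measurable_const
  | succ n ih => exact measurable_const.max (hf.add (ih.comp hT))

/-- One-sided Birkhoff: if `∫ f < 0`, ergodic sums are a.e. bounded above. -/
lemma ergodic_sums_bdd {Ω : Type*} [MeasurableSpace Ω] {μ : Measure Ω} [IsProbabilityMeasure μ]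
    {T : Ω → Ω} (hT : Ergodic T μ) {f : Ω → ℝ} (hfm : Measurable f) (hf : Integrable f μ)
    (hneg : ∫ x, f x ∂μ < 0) :
    ∀ᵐ x ∂μ, ∃ C : ℝ, ∀ n : ℕ, ∑ k ∈ Finset.range n, f (T^[k] x) ≤ C := by
  set E : Set Ω := {x | ∃ j : ℕ, ∀ n, runMax T f n x ≤ j} with hE
  have hEm : MeasurableSet E := by
    have : E = ⋃ j : ℕ, ⋂ n, {x | runMax T f n x ≤ j} := by ext; simp [hE]
    rw [this]
    exact MeasurableSet.iUnion fun j => MeasurableSet.iInter fun n =>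
      measurableSet_le (runMax_measurable hT.measurable hfm n) measurable_const
  have hinv : T ⁻¹' E = E := by
    ext x
    simp only [hE, Set.mem_preimage, Set.mem_ofPred_eq]
    constructor
    · rintro ⟨j, hj⟩
      obtain ⟨m, hm⟩ := exists_nat_ge (f x + j)
      refine ⟨m, fun n => ?_⟩
      cases n with
      | zero => simp [runMax]
      | succ n => rw [runMax]; exact max_le (by positivity) (by linarith [hj n])
    · rintro ⟨j, hj⟩
      obtain ⟨m, hm⟩ := exists_nat_ge (j - f x)
      refine ⟨m, fun n => ?_⟩
      have := hj (n+1)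
      rw [runMax] at this
      linarith [le_max_right 0 (f x + runMax T f n (T x))]
  rcases hT.toPreErgodic.ae_empty_or_univ hEm hinv with h | h
  · exfalso
    have hnot : ∀ᵐ x ∂μ, x ∉ E := measure_eq_zero_iff_ae_notMem.1 (ae_eq_empty.1 h)
    have hlim : Tendsto (fun n => ∫ x, (runMax T f (n+1) x - runMax T f n (T x)) ∂μ) atTop
        (nhds (∫ x, f x ∂μ)) := by
      refine tendsto_integral_of_dominated_convergence (fun x => |f x|) ?_ hf.abs ?_ ?_
      · intro n
        exact ((runMax_measurable hT.measurable hfm (n+1)).sub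
          ((runMax_measurable hT.measurable hfm n).comp hT.measurable)).aestronglyMeasurable
      · intro n
        refine Eventually.of_forall fun x => ?_
        have h1 := runMax_nonneg T f n (T x)
        rw [Real.norm_eq_abs, runMax]
        rcases max_cases 0 (f x + runMax T f n (T x)) with h | h
        · rw [h.1, abs_le]
          constructor <;> linarith [abs_nonneg (f x), neg_abs_le (f x), le_abs_self (f x)]
        · rw [h.1]; simp
      · filter_upwards [hnot] with x hx
        apply tendsto_const_nhds.congr'
        have hx2 : T x ∉ E := fun h => hx (by rw [← hinv]; exact h)
        simp only [hE, Set.mem_ofPred_eq, not_exists, not_forall, not_le] at hx2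
        obtain ⟨m, hm⟩ := exists_nat_ge (-f x)
        obtain ⟨n0, hn0⟩ := hx2 m
        filter_upwards [eventually_ge_atTop n0] with n hn
        have : runMax T f n0 (T x) ≤ runMax T f n (T x) :=
          monotone_nat_of_le_succ (f := fun n => runMax T f n (T x))
            (fun n => runMax_mono T f n (T x)) hn
        rw [runMax, max_eq_right (by linarith)]; ring
    have hge : 0 ≤ ∫ x, f x ∂μ := by
      refine ge_of_tendsto' hlim fun n => ?_
      have i1 := runMax_integrable hT.toMeasurePreserving hf n
      have i2 := runMax_integrable hT.toMeasurePreserving hf (n+1)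
      have i3 : Integrable (fun x => runMax T f n (T x)) μ :=
        hT.toMeasurePreserving.integrable_comp_of_integrable i1
      rw [integral_sub i2 i3]
      have : ∫ x, runMax T f n (T x) ∂μ = ∫ x, runMax T f n x ∂μ := by
        have hm := hT.toMeasurePreserving
        conv_rhs => rw [← hm.map_eq]
        rw [integral_map hm.measurable.aemeasurable]
        exact (runMax_measurable hT.measurable hfm n).aestronglyMeasurable
      rw [this, sub_nonneg]
      exact integral_mono i1 i2 fun x => runMax_mono T f n x
    linarith
  · filter_upwards [eventuallyEq_univ.1 h] with x hx
    obtain ⟨j, hj⟩ := hx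
    exact ⟨j, fun n => (sum_le_runMax T f n x).trans (hj n)⟩

/-- Linear upper bounds on ergodic sums, for every slope above the mean. -/
lemma ergodic_upper {Ω : Type*} [MeasurableSpace Ω] {μ : Measure Ω} [IsProbabilityMeasure μ]
    {T : Ω → Ω} (hT : Ergodic T μ) {f : Ω → ℝ} (hfm : Measurable f) (hf : Integrable f μ) :
    ∀ᵐ x ∂μ, ∀ a : ℝ, ∫ x, f x ∂μ < a →
      ∃ C : ℝ, ∀ n : ℕ, ∑ k ∈ Finset.range n, f (T^[k] x) ≤ a * n + C := by
  have key : ∀ j : ℕ, ∀ᵐ x ∂μ, ∃ C : ℝ, ∀ n : ℕ,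
      ∑ k ∈ Finset.range n, (f (T^[k] x) - (∫ x, f x ∂μ + 1 / ((j:ℝ) + 1))) ≤ C := by
    intro j
    refine ergodic_sums_bdd hT (hfm.sub_const _) (hf.sub (integrable_const _)) ?_
    rw [integral_sub hf (integrable_const _)]
    simp
    positivity
  filter_upwards [ae_all_iff.2 key] with x hx a ha
  obtain ⟨j, hj⟩ := exists_nat_one_div_lt (sub_pos.2 ha)
  obtain ⟨C, hC⟩ := hx j
  refine ⟨C, fun n => ?_⟩
  have := hC n
  rw [Finset.sum_sub_distrib, Finset.sum_const, Finset.card_range, nsmul_eq_mul] at this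
  have h2 : (n:ℝ) * (∫ x, f x ∂μ + 1 / ((j:ℝ) + 1)) ≤ n * a :=
    mul_le_mul_of_nonneg_left (by linarith) (by positivity)
  linarith

/-- Wallis-type weights `binom(2n,n)/4^n`. -/
noncomputable def wSeq (k : ℕ) : ℝ := ∏ i ∈ Finset.range k, ((2 * (i:ℝ) + 1) / (2 * i + 2))

lemma wSeq_succ (k : ℕ) : wSeq (k+1) = wSeq k * ((2 * (k:ℝ) + 1) / (2 * k + 2)) :=
  Finset.prod_range_succ _ _

lemma wSeq_pos (k : ℕ) : 0 < wSeq k := Finset.prod_pos fun i _ => by positivity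

lemma wSeq_antitone : Antitone wSeq := by
  refine antitone_nat_of_succ_le fun n => ?_
  rw [wSeq_succ]
  refine mul_le_of_le_one_right (wSeq_pos n).le ?_
  rw [div_le_one (by positivity)]; linarith

lemma wSeq_wallis (k : ℕ) : wSeq k ^ 2 * (Real.Wallis.W k * (2 * k + 1)) = 1 := by
  induction k with
  | zero => simp [wSeq, Real.Wallis.W]
  | succ k ih =>
    rw [wSeq_succ, Real.Wallis.W_succ]
    refine Eq.trans ?_ ih
    push_cast
    field_simp
    ring

lemma wSeq_tendsto : Tendsto (fun n : ℕ => Real.sqrt n * wSeq n) atTop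
    (nhds (1 / Real.sqrt Real.pi)) := by
  have h1 : ∀ n : ℕ, Real.sqrt n * wSeq n = Real.sqrt ((n / (2 * n + 1)) / Real.Wallis.W n) := by
    intro n
    rw [eq_comm, Real.sqrt_eq_iff_mul_self_eq]
    · have := wSeq_wallis n
      have hW := Real.Wallis.W_pos n
      have h2 : wSeq n ^ 2 = 1 / (Real.Wallis.W n * (2 * n + 1)) := by
        rw [eq_div_iff (by positivity)]; exact this
      have : Real.sqrt n * wSeq n * (Real.sqrt n * wSeq n) = (Real.sqrt n)^2 * wSeq n ^ 2 := by ring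
      rw [this, h2, Real.sq_sqrt (by positivity)]
      field_simp
    · have := Real.Wallis.W_pos n
      positivity
    · have := wSeq_pos n
      positivity
  simp_rw [h1]
  have h3 : 1 / Real.sqrt Real.pi = Real.sqrt ((1/2) / (Real.pi / 2)) := by
    rw [show (1/2) / (Real.pi/2) = 1 / Real.pi by field_simp, Real.sqrt_div zero_le_one,
      Real.sqrt_one]
  rw [h3]
  refine (Real.continuous_sqrt.tendsto _).comp ?_
  exact (Stirling.tendsto_self_div_two_mul_self_add_one).div Real.Wallis.tendsto_W_nhds_pi_div_two
    (by positivity)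

lemma wSeq_eq_choose (n : ℕ) : Ring.choose ((1/2:ℝ) + n - 1) n = wSeq n := by
  rw [Ring.choose_eq_smul, Polynomial.descPochhammer_smeval_eq_ascPochhammer,
    Polynomial.ascPochhammer_smeval_eq_eval]
  rw [show (1/2:ℝ) + n - 1 - n + 1 = 1/2 by ring]
  induction n with
  | zero => simp [wSeq]
  | succ n ih =>
    rw [wSeq_succ, ← ih, ascPochhammer_succ_right, Nat.factorial_succ]
    simp only [smul_eq_mul, Polynomial.eval_mul, Polynomial.eval_add, Polynomial.eval_X,
      Polynomial.eval_natCast]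
    push_cast
    field_simp
    ring

lemma wSeq_hasSum {s : ℝ} (h0 : 0 ≤ s) (h1 : s < 1) :
    HasSum (fun n => wSeq n * s ^ n) (1 / Real.sqrt (1 - s)) := by
  have := (Real.one_div_one_sub_rpow_hasFPowerSeriesOnBall_zero (1/2)).hasSum (y := s)
    (by simp [enorm_eq_nnnorm]; rw [← NNReal.coe_lt_coe]; simpa [abs_of_nonneg h0] using h1)
  simp only [zero_add] at this
  rw [Real.sqrt_eq_rpow]
  refine this.congr_fun ?_
  intro n
  rw [FormalMultilinearSeries.ofScalars_apply_eq, wSeq_eq_choose]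
  simp

lemma taub_summable {d : ℕ → ℝ} {K : ℝ} (hd : ∀ n, |d n| ≤ K) {g : ℝ → ℝ} {M : ℝ}
    (hg : ∀ x ∈ Set.Icc (0:ℝ) 1, |g x| ≤ M) {s : ℝ} (h0 : 0 < s) (h1 : s < 1) :
    Summable (fun n => d n * s ^ n * g (s ^ n)) := by
  refine Summable.of_norm_bounded (g := fun n => K * M * s ^ n)
    ((summable_geometric_of_lt_one h0.le h1).mul_left _) fun n => ?_
  have h2 := hg (s ^ n) ⟨by positivity, pow_le_one₀ h0.le h1.le⟩
  rw [Real.norm_eq_abs, abs_mul, abs_mul, abs_of_pos (pow_pos h0 n)]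
  have : |d n| * |g (s^n)| ≤ K * M :=
    mul_le_mul (hd n) h2 (abs_nonneg _) ((abs_nonneg _).trans (hd 0))
  nlinarith [pow_pos h0 n]

lemma taub_poly {d : ℕ → ℝ} {K : ℝ} (hd : ∀ n, |d n| ≤ K)
    (h : Tendsto (fun s : ℝ => Real.sqrt (1 - s) * ∑' n, d n * s ^ n) (nhdsWithin 1 (Set.Iio 1))
      (nhds 0)) (p : Polynomial ℝ) :
    Tendsto (fun s : ℝ => Real.sqrt (1 - s) * ∑' n, d n * s ^ n * p.eval (s ^ n))
      (nhdsWithin 1 (Set.Iio 1)) (nhds 0) := by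
  have hev : ∀ᶠ s : ℝ in nhdsWithin 1 (Set.Iio 1), 0 < s ∧ s < 1 := by
    have := Ioo_mem_nhdsLT (show (0:ℝ) < 1 by norm_num)
    exact this
  have hbd : ∀ p : Polynomial ℝ, ∃ M, ∀ x ∈ Set.Icc (0:ℝ) 1, |p.eval x| ≤ M := fun p => by
    obtain ⟨M, hM⟩ := isCompact_Icc.exists_bound_of_continuousOn
      (f := fun x => p.eval x) (s := Set.Icc (0:ℝ) 1) p.continuous.continuousOn
    exact ⟨M, hM⟩
  induction p using Polynomial.induction_on' with
  | add p q hp hq =>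
    have := hp.add hq
    rw [add_zero] at this
    refine this.congr' ?_
    filter_upwards [hev] with s hs
    obtain ⟨M1, h1⟩ := hbd p
    obtain ⟨M2, h2⟩ := hbd q
    rw [← mul_add, ← (taub_summable hd h1 hs.1 hs.2).tsum_add (taub_summable hd h2 hs.1 hs.2)]
    congr 1
    refine tsum_congr fun n => ?_
    rw [Polynomial.eval_add]; ring
  | monomial k a =>
    have h1 : Tendsto (fun s : ℝ => s ^ (k+1)) (nhdsWithin 1 (Set.Iio 1))
        (nhdsWithin 1 (Set.Iio 1)) := by
      refine tendsto_nhdsWithin_iff.2 ⟨?_, ?_⟩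
      · have : Tendsto (fun s : ℝ => s ^ (k+1)) (nhds 1) (nhds (1 ^ (k+1))) :=
          (continuous_pow (k+1)).tendsto 1
        rw [one_pow] at this
        exact this.mono_left nhdsWithin_le_nhds
      · filter_upwards [hev] with s hs
        exact pow_lt_one₀ hs.1.le hs.2 (by simp)
    have h2 := ((h.comp h1).abs.mul_const |a|)
    rw [abs_zero, zero_mul] at h2
    refine squeeze_zero_norm' ?_ h2
    filter_upwards [hev] with s hs
    have e : ∑' n, d n * s ^ n * (Polynomial.monomial k a).eval (s ^ n)
        = (∑' n, d n * (s ^ (k+1)) ^ n) * a := by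
      rw [← tsum_mul_right]
      refine tsum_congr fun n => ?_
      rw [Polynomial.eval_monomial, ← pow_mul, ← pow_mul, pow_mul', pow_mul', pow_succ]
      ring
    rw [e, Real.norm_eq_abs, ← mul_assoc, abs_mul]
    refine mul_le_mul_of_nonneg_right ?_ (abs_nonneg _)
    simp only [Function.comp_apply]
    rw [abs_mul, abs_mul]
    refine mul_le_mul_of_nonneg_right ?_ (abs_nonneg _)
    rw [abs_of_nonneg (Real.sqrt_nonneg _), abs_of_nonneg (Real.sqrt_nonneg _)]
    refine Real.sqrt_le_sqrt ?_
    have : s ^ (k+1) ≤ s := pow_le_of_le_one hs.1.le hs.2.le (by simp)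
    linarith

lemma taub_cont {d e : ℕ → ℝ} {K : ℝ} (hd : ∀ n, |d n| ≤ e n) (he : ∀ n, e n ≤ K)
    (h : Tendsto (fun s : ℝ => Real.sqrt (1 - s) * ∑' n, d n * s ^ n) (nhdsWithin 1 (Set.Iio 1))
      (nhds 0)) {L : ℝ}
    (h' : Tendsto (fun s : ℝ => Real.sqrt (1 - s) * ∑' n, e n * s ^ n) (nhdsWithin 1 (Set.Iio 1))
      (nhds L)) {g : ℝ → ℝ} (hg : Continuous g) :
    Tendsto (fun s : ℝ => Real.sqrt (1 - s) * ∑' n, d n * s ^ n * g (s ^ n))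
      (nhdsWithin 1 (Set.Iio 1)) (nhds 0) := by
  have hev : ∀ᶠ s : ℝ in nhdsWithin 1 (Set.Iio 1), 0 < s ∧ s < 1 := by
    have := Ioo_mem_nhdsLT (show (0:ℝ) < 1 by norm_num)
    exact this
  have hdK : ∀ n, |d n| ≤ K := fun n => (hd n).trans (he n)
  have heK : ∀ n, |e n| ≤ K := fun n => by
    rw [abs_of_nonneg ((abs_nonneg _).trans (hd n))]; exact he n
  have hL : 0 ≤ L := by
    refine ge_of_tendsto h' ?_
    filter_upwards [hev] with s hs
    refine mul_nonneg (Real.sqrt_nonneg _) (tsum_nonneg fun n => ?_)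
    have := (abs_nonneg _).trans (hd n)
    have := hs.1
    positivity
  obtain ⟨Mg, hMg⟩ := isCompact_Icc.exists_bound_of_continuousOn
      (f := g) (s := Set.Icc (0:ℝ) 1) hg.continuousOn
  rw [Metric.tendsto_nhds]
  intro ε hε
  obtain ⟨p, hp⟩ := exists_polynomial_near_of_continuousOn 0 1 g hg.continuousOn
    (ε / (2 * (L + 1))) (by positivity)
  obtain ⟨Mp, hMp⟩ := isCompact_Icc.exists_bound_of_continuousOn
      (f := fun x => p.eval x) (s := Set.Icc (0:ℝ) 1) p.continuous.continuousOn
  have h1 := (Metric.tendsto_nhds.1 (taub_poly hdK h p)) (ε/2) (by positivity)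
  filter_upwards [hev, h1, (tendsto_order.1 h').2 (L+1) (by linarith)] with s hs h1 h2
  rw [dist_zero_right, Real.norm_eq_abs] at *
  have sg := taub_summable hdK hMg hs.1 hs.2
  have sp := taub_summable hdK hMp hs.1 hs.2
  have se : Summable (fun n => e n * s ^ n) := by
    simpa using taub_summable heK (g := fun _ => 1) (M := 1) (by simp) hs.1 hs.2
  have h3 : |(∑' n, d n * s ^ n * g (s ^ n)) - ∑' n, d n * s ^ n * p.eval (s ^ n)|
      ≤ (∑' n, e n * s ^ n) * (ε / (2 * (L + 1))) := by
    rw [← sg.tsum_sub sp, ← tsum_mul_right, ← Real.norm_eq_abs]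
    refine tsum_of_norm_bounded (se.mul_right _).hasSum fun n => ?_
    have hx : s ^ n ∈ Set.Icc (0:ℝ) 1 := ⟨by have := hs.1; positivity, pow_le_one₀ hs.1.le hs.2.le⟩
    rw [← mul_sub, Real.norm_eq_abs, abs_mul, abs_mul, abs_of_nonneg hx.1, abs_sub_comm]
    exact mul_le_mul (mul_le_mul_of_nonneg_right (hd n) hx.1) (hp _ hx).le (abs_nonneg _)
      (mul_nonneg ((abs_nonneg _).trans (hd n)) hx.1)
  have h4 : Real.sqrt (1 - s) * |(∑' n, d n * s ^ n * g (s ^ n))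
      - ∑' n, d n * s ^ n * p.eval (s ^ n)| ≤ ε / 2 := by
    calc _ ≤ Real.sqrt (1 - s) * ((∑' n, e n * s ^ n) * (ε / (2 * (L + 1)))) :=
          mul_le_mul_of_nonneg_left h3 (Real.sqrt_nonneg _)
      _ = (Real.sqrt (1 - s) * (∑' n, e n * s ^ n)) * (ε / (2 * (L + 1))) := by ring
      _ ≤ (L + 1) * (ε / (2 * (L + 1))) := mul_le_mul_of_nonneg_right h2.le (by positivity)
      _ = ε / 2 := by field_simp
  have h5 : Real.sqrt (1 - s) * ∑' n, d n * s ^ n * g (s ^ n) =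
      Real.sqrt (1 - s) * (∑' n, d n * s ^ n * p.eval (s ^ n)) +
      Real.sqrt (1 - s) * ((∑' n, d n * s ^ n * g (s ^ n))
      - ∑' n, d n * s ^ n * p.eval (s ^ n)) := by ring
  rw [h5]
  refine (abs_add_le _ _).trans_lt ?_
  rw [abs_mul (Real.sqrt (1-s)) (_ - _), abs_of_nonneg (Real.sqrt_nonneg (1 - s))]
  linarith

lemma taub_weights {d e : ℕ → ℝ} {K : ℝ} (hd : ∀ n, |d n| ≤ e n) (he : ∀ n, e n ≤ K)
    (h : Tendsto (fun s : ℝ => Real.sqrt (1 - s) * ∑' n, d n * s ^ n) (nhdsWithin 1 (Set.Iio 1))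
      (nhds 0)) {L : ℝ}
    (h' : Tendsto (fun s : ℝ => Real.sqrt (1 - s) * ∑' n, e n * s ^ n) (nhdsWithin 1 (Set.Iio 1))
      (nhds L)) {a b : ℝ} (ha : 0 < a) (hab : a < b) {ε : ℝ} (hε : 0 < ε) :
    ∀ᶠ N : ℕ in atTop, ∃ q : ℕ → ℝ, (∀ n, 0 ≤ q n) ∧ (∀ n, q n ≠ 0 → a * N ≤ n ∧ n ≤ b * N) ∧
      HasSum q 1 ∧ Real.sqrt N * |∑' n, d n * q n| ≤ ε := by
  set g : ℝ → ℝ := fun y => max 0 (min (y - Real.exp (-b)) (Real.exp (-a) - y)) with hgdef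
  have hgc : Continuous g := by fun_prop
  set s : ℕ → ℝ := fun N => Real.exp (-(1 / (N:ℝ))) with hs
  have hsN : Tendsto s atTop (nhdsWithin 1 (Set.Iio 1)) := by
    refine tendsto_nhdsWithin_iff.2 ⟨?_, ?_⟩
    · have h1 : Tendsto (fun N : ℕ => -(1 / (N:ℝ))) atTop (nhds 0) := by
        simpa using (tendsto_one_div_atTop_nhds_zero_nat (𝕜 := ℝ)).neg
      have := (Real.continuous_exp.tendsto 0).comp h1
      rwa [Real.exp_zero] at this
    · filter_upwards [eventually_gt_atTop 0] with N hN
      have : (0:ℝ) < N := by exact_mod_cast hN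
      simp only [hs, Set.mem_Iio, Real.exp_lt_one_iff, Left.neg_neg_iff]
      positivity
  have hlim := (taub_cont hd he h h' hgc).comp hsN
  set a' := a + (b - a) / 3 with ha'
  set b' := a + 2 * (b - a) / 3 with hb'
  have hab' : a' < b' := by rw [ha', hb']; linarith
  set c0 := min (Real.exp (-b') - Real.exp (-b)) (Real.exp (-a) - Real.exp (-a')) with hc0
  have hc0pos : 0 < c0 := by
    refine lt_min ?_ ?_
    · rw [sub_pos, Real.exp_lt_exp]; rw [hb']; linarith
    · rw [sub_pos, Real.exp_lt_exp]; rw [ha']; linarith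
  set c1 := Real.exp (-b') * c0 * ((b' - a') / 2) with hc1
  have hc1pos : 0 < c1 := by
    have : 0 < b' - a' := by linarith
    positivity
  have hbig : ∀ᶠ N : ℕ in atTop, 2 / (b' - a') ≤ (N:ℝ) :=
    (tendsto_natCast_atTop_atTop).eventually_ge_atTop _
  have hlim2 := (Metric.tendsto_nhds.1 hlim) (ε * c1 / 2) (by positivity)
  filter_upwards [hlim2, hbig, eventually_gt_atTop 0] with N h1 hN hN0
  have hNpos : (0:ℝ) < N := by exact_mod_cast hN0
  have hpow : ∀ n : ℕ, s N ^ n = Real.exp (-(n / N : ℝ)) := by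
    intro n
    rw [hs]
    simp only
    rw [← Real.exp_nat_mul]
    congr 1; field_simp
  set q0 : ℕ → ℝ := fun n => s N ^ n * g (s N ^ n) with hq0
  have hg0 : ∀ y, 0 ≤ g y := fun y => le_max_left _ _
  have hs0 : 0 < s N := Real.exp_pos _
  have hs1 : s N < 1 := by
    simp only [hs, Real.exp_lt_one_iff, Left.neg_neg_iff]; positivity
  have hq0n : ∀ n, 0 ≤ q0 n := fun n => mul_nonneg (by positivity) (hg0 _)
  have hsupp : ∀ n, q0 n ≠ 0 → a * N ≤ n ∧ (n:ℝ) ≤ b * N := by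
    intro n hn
    have hgn : g (s N ^ n) ≠ 0 := right_ne_zero_of_mul hn
    have hgp : 0 < min (s N ^ n - Real.exp (-b)) (Real.exp (-a) - s N ^ n) := by
      by_contra hcon
      exact hgn (max_eq_left (not_lt.1 hcon))
    obtain ⟨h3, h4⟩ := lt_min_iff.1 hgp
    rw [hpow, sub_pos, Real.exp_lt_exp] at h3 h4
    have h3' : (n:ℝ) / N < b := by linarith
    have h4' : a < (n:ℝ) / N := by linarith
    rw [div_lt_iff₀ hNpos] at h3'
    rw [lt_div_iff₀ hNpos] at h4'
    exact ⟨h4'.le, h3'.le⟩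
  have hfin : (Function.support q0).Finite := by
    refine (Set.finite_Iic ⌊b * N⌋₊).subset fun n hn => ?_
    exact Nat.le_floor (hsupp n hn).2
  have hsum : Summable q0 := summable_of_hasFiniteSupport hfin
  set G := ∑' n, q0 n with hG
  have hGlow : c1 * N ≤ G := by
    have hsub : ∀ n ∈ Finset.Ioc ⌊a' * N⌋₊ ⌊b' * N⌋₊, Real.exp (-b') * c0 ≤ q0 n := by
      intro n hn
      rw [Finset.mem_Ioc] at hn
      have h3 : a' * N < n := (Nat.floor_lt (by rw [ha']; have : 0 < b - a := by linarith
                                                positivity)).1 hn.1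
      have h4 : (n:ℝ) ≤ b' * N := (Nat.le_floor_iff (by
        have : 0 < b - a := by linarith
        rw [hb']; positivity)).1 hn.2
      have h3' : a' ≤ (n:ℝ) / N := by rw [le_div_iff₀ hNpos]; exact h3.le
      have h4' : (n:ℝ) / N ≤ b' := by rw [div_le_iff₀ hNpos]; exact h4
      simp only [hq0]
      rw [hpow]
      have e1 : Real.exp (-b') ≤ Real.exp (-(n / N : ℝ)) := Real.exp_le_exp.2 (by linarith)
      have e2 : Real.exp (-(n / N : ℝ)) ≤ Real.exp (-a') := Real.exp_le_exp.2 (by linarith)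
      refine mul_le_mul e1 ?_ hc0pos.le (Real.exp_pos _).le
      refine le_max_of_le_right (le_min ?_ ?_)
      · exact (min_le_left _ _).trans (by linarith)
      · exact (min_le_right _ _).trans (by linarith)
    have h5 := Finset.card_nsmul_le_sum _ _ _ hsub
    rw [Nat.card_Ioc, nsmul_eq_mul] at h5
    have h6 : ∑ n ∈ Finset.Ioc ⌊a' * N⌋₊ ⌊b' * N⌋₊, q0 n ≤ G :=
      hsum.sum_le_tsum _ fun n _ => hq0n n
    have h7 : (b' - a') / 2 * N ≤ ((⌊b' * N⌋₊ - ⌊a' * N⌋₊ : ℕ) : ℝ) := by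
      have hA : 0 ≤ a' * N := by
        have : 0 < b - a := by linarith
        rw [ha']; positivity
      have h8 : ((⌊b' * N⌋₊ : ℝ)) - ⌊a' * N⌋₊ ≤ ((⌊b' * N⌋₊ - ⌊a' * N⌋₊ : ℕ) : ℝ) := by
        rw [sub_le_iff_le_add]; exact_mod_cast le_tsub_add
      have h9 := Nat.floor_le hA
      have h10 := Nat.lt_floor_add_one (b' * N)
      rw [div_le_iff₀ (by linarith)] at hN
      nlinarith
    calc c1 * N = ((b' - a') / 2 * N) * (Real.exp (-b') * c0) := by rw [hc1]; ring
      _ ≤ _ := (mul_le_mul_of_nonneg_right h7 (by positivity)).trans (h5.trans h6)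
  have hGpos : 0 < G := lt_of_lt_of_le (by positivity) hGlow
  refine ⟨fun n => q0 n / G, fun n => div_nonneg (hq0n n) hGpos.le, fun n hn => hsupp n ?_, ?_, ?_⟩
  · intro h0; exact hn (by simp [h0])
  · have := hsum.hasSum.div_const G
    rwa [← hG, div_self hGpos.ne'] at this
  · have e1 : ∑' n, d n * (q0 n / G) = (∑' n, d n * s N ^ n * g (s N ^ n)) / G := by
      rw [← tsum_div_const]
      refine tsum_congr fun n => ?_
      simp only [hq0]; ring
    rw [dist_zero_right, Real.norm_eq_abs] at h1
    simp only [Function.comp_apply] at h1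
    rw [e1, abs_div, abs_of_pos hGpos]
    rw [abs_mul, abs_of_nonneg (Real.sqrt_nonneg _)] at h1
    set X := |∑' n, d n * s N ^ n * g (s N ^ n)| with hX
    have hXn : 0 ≤ X := abs_nonneg _
    -- `1 - exp(-1/N) ≥ 1/(N+1) ≥ 1/(4N)`
    have h2 : 1 / (4 * (N:ℝ)) ≤ 1 - s N := by
      have h3 := Real.add_one_le_exp (1 / (N:ℝ))
      have h4 : s N = 1 / Real.exp (1 / (N:ℝ)) := by
        simp only [hs]; rw [Real.exp_neg, one_div (Real.exp _)]
      have h5 : s N ≤ 1 / (1 / (N:ℝ) + 1) := by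
        rw [h4]; exact one_div_le_one_div_of_le (by positivity) h3
      have h6 : 1 / (1 / (N:ℝ) + 1) = 1 - 1 / (N + 1) := by field_simp; ring
      have h7 : 1 / (4 * (N:ℝ)) ≤ 1 / (N + 1) := by
        refine one_div_le_one_div_of_le (by positivity) ?_
        have : (1:ℝ) ≤ N := by exact_mod_cast hN0
        linarith
      linarith
    have h3 : 1 / (2 * Real.sqrt N) ≤ Real.sqrt (1 - s N) := by
      refine Real.le_sqrt_of_sq_le ?_
      rw [div_pow, mul_pow, Real.sq_sqrt hNpos.le]
      norm_num at h2 ⊢; linarith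
    have hsq : 0 < Real.sqrt N := Real.sqrt_pos.2 hNpos
    have h4 : X / (2 * Real.sqrt N) ≤ ε * c1 / 2 := by
      have := mul_le_mul_of_nonneg_right h3 hXn
      have e : 1 / (2 * Real.sqrt N) * X = X / (2 * Real.sqrt N) := by ring
      linarith
    rw [div_le_iff₀ (by positivity)] at h4
    rw [← mul_div_assoc, div_le_iff₀ hGpos]
    have h5 : Real.sqrt N * X ≤ Real.sqrt N * (ε * c1 / 2 * (2 * Real.sqrt N)) :=
      mul_le_mul_of_nonneg_left h4 hsq.le
    have h6 : Real.sqrt N * (ε * c1 / 2 * (2 * Real.sqrt N)) = ε * (c1 * N) := by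
      have := Real.mul_self_sqrt hNpos.le
      linear_combination ε * c1 * this
    rw [h6] at h5
    exact h5.trans (mul_le_mul_of_nonneg_left hGlow hε.le)

lemma tauberian {u : ℕ → ℝ} (hu0 : ∀ n, 0 ≤ u n) (hanti : Antitone u) {L : ℝ} (hL : 0 ≤ L)
    (h : Tendsto (fun s : ℝ => Real.sqrt (1 - s) * ∑' n, u n * s ^ n) (nhdsWithin 1 (Set.Iio 1))
      (nhds L)) :
    Tendsto (fun n : ℕ => Real.sqrt n * u n) atTop (nhds (L / Real.sqrt Real.pi)) := by
  have hev : ∀ᶠ s : ℝ in nhdsWithin 1 (Set.Iio 1), 0 < s ∧ s < 1 := by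
    have := Ioo_mem_nhdsLT (show (0:ℝ) < 1 by norm_num)
    exact this
  have hub : ∀ n, |u n| ≤ u 0 := fun n => by
    rw [abs_of_nonneg (hu0 n)]; exact hanti (Nat.zero_le n)
  have hus : ∀ s : ℝ, 0 < s → s < 1 → Summable (fun n => u n * s ^ n) := fun s h0 h1 => by
    simpa using taub_summable hub (g := fun _ => 1) (M := 1) (by simp) h0 h1
  have hw1 : ∀ n, wSeq n ≤ 1 := fun n => by simpa [wSeq] using wSeq_antitone (Nat.zero_le n)
  have hw : Tendsto (fun s : ℝ => Real.sqrt (1 - s) * ∑' n, L * wSeq n * s ^ n)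
      (nhdsWithin 1 (Set.Iio 1)) (nhds L) := by
    refine tendsto_const_nhds.congr' ?_
    filter_upwards [hev] with s hs
    simp_rw [mul_assoc]
    rw [tsum_mul_left, (wSeq_hasSum hs.1.le hs.2).tsum_eq]
    have : Real.sqrt (1 - s) ≠ 0 := (Real.sqrt_pos.2 (by linarith)).ne'
    field_simp
  have hws : ∀ s : ℝ, 0 < s → s < 1 → Summable (fun n => L * wSeq n * s ^ n) := fun s h0 h1 => by
    simp_rw [mul_assoc]
    exact (wSeq_hasSum h0.le h1).summable.mul_left L
  have hd : ∀ n, |u n - L * wSeq n| ≤ u n + L * wSeq n := fun n => by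
    have := hu0 n
    have : 0 ≤ L * wSeq n := mul_nonneg hL (wSeq_pos n).le
    rw [abs_le]; constructor <;> linarith
  have he : ∀ n, u n + L * wSeq n ≤ u 0 + L := fun n => by
    have := hanti (Nat.zero_le n)
    have := mul_le_mul_of_nonneg_left (hw1 n) hL
    linarith
  have hd0 : Tendsto (fun s : ℝ => Real.sqrt (1 - s) * ∑' n, (u n - L * wSeq n) * s ^ n)
      (nhdsWithin 1 (Set.Iio 1)) (nhds 0) := by
    have := h.sub hw
    rw [sub_self] at this
    refine this.congr' ?_
    filter_upwards [hev] with s hs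
    rw [← mul_sub, ← (hus s hs.1 hs.2).tsum_sub (hws s hs.1 hs.2)]
    simp_rw [sub_mul]
  have he0 : Tendsto (fun s : ℝ => Real.sqrt (1 - s) * ∑' n, (u n + L * wSeq n) * s ^ n)
      (nhdsWithin 1 (Set.Iio 1)) (nhds (L + L)) := by
    refine (h.add hw).congr' ?_
    filter_upwards [hev] with s hs
    rw [← mul_add, ← (hus s hs.1 hs.2).tsum_add (hws s hs.1 hs.2)]
    simp_rw [add_mul]
  have hkey := fun {a b : ℝ} (ha : 0 < a) (hab : a < b) {ε : ℝ} (hε : 0 < ε) =>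
    taub_weights hd he hd0 he0 ha hab hε
  have hsq : ∀ r : ℕ → ℝ, (∀ n, 0 ≤ r n) → (∀ n, r n ≤ u 0 + L) → ∀ q : ℕ → ℝ, (∀ n, 0 ≤ q n) →
      Summable q → Summable (fun n => r n * q n) := fun r h1 h2 q h3 h4 =>
    Summable.of_nonneg_of_le (fun n => mul_nonneg (h1 n) (h3 n))
      (fun n => mul_le_mul_of_nonneg_right (h2 n) (h3 n)) (h4.mul_left _)
  have hsu := hsq u hu0 (fun n => by linarith [hanti (Nat.zero_le n)])
  have hsw := hsq (fun n => L * wSeq n) (fun n => mul_nonneg hL (wSeq_pos n).le)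
    (fun n => by linarith [he n, hu0 n, hu0 0, mul_le_mul_of_nonneg_left (hw1 n) hL])
  have hcont : ContinuousAt (fun b : ℝ => L / Real.sqrt Real.pi / Real.sqrt b) 1 := by
    refine continuousAt_const.div Real.continuous_sqrt.continuousAt (by simp)
  have hcont' : Tendsto (fun b : ℝ => L / Real.sqrt Real.pi / Real.sqrt b) (nhds 1)
      (nhds (L / Real.sqrt Real.pi)) := by
    have := hcont.tendsto
    simpa using this
  have hwl : Tendsto (fun m : ℕ => L * (Real.sqrt m * wSeq m)) atTop
      (nhds (L / Real.sqrt Real.pi)) := by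
    have := wSeq_tendsto.const_mul L
    rwa [mul_one_div] at this
  refine tendsto_order.2 ⟨fun l hl => ?_, fun l hl => ?_⟩
  · obtain ⟨b, hb1, hb2⟩ : ∃ b : ℝ, 1 < b ∧ l < L / Real.sqrt Real.pi / Real.sqrt b := by
      have h1 := ((tendsto_order.1 hcont').1 l hl)
      have h2 : ∀ᶠ b : ℝ in nhdsWithin 1 (Set.Ioi 1), _ := nhdsWithin_le_nhds h1
      exact (((eventually_mem_nhdsWithin).and h2).exists)
    set ε := (L / Real.sqrt Real.pi / Real.sqrt b - l) / 2 with hε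
    have hεp : 0 < ε := by rw [hε]; linarith
    have hfl : Tendsto (fun N : ℕ => ⌊b * N⌋₊) atTop atTop :=
      tendsto_nat_floor_atTop.comp ((tendsto_natCast_atTop_atTop).const_mul_atTop (by linarith))
    have h3 := (hwl.comp hfl).div_const (Real.sqrt b)
    have h4 := (tendsto_order.1 h3).1 (l + ε) (by rw [hε]; linarith)
    filter_upwards [hkey one_pos hb1 hεp, h4] with N hq h4
    obtain ⟨q, q0, qs, qsum, qd⟩ := hq
    simp only [Function.comp_apply] at h4
    set m := ⌊b * (N:ℝ)⌋₊ with hm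
    have i1 : ∑' n, u n * q n ≤ u N := by
      have : ∑' n, u n * q n ≤ ∑' n, u N * q n := by
        refine (hsu q q0 qsum.summable).tsum_le_tsum (fun n => ?_) (qsum.summable.mul_left _)
        by_cases hz : q n = 0
        · simp [hz]
        · refine mul_le_mul_of_nonneg_right (hanti ?_) (q0 n)
          have := (qs n hz).1
          rw [one_mul] at this; exact_mod_cast this
      rwa [tsum_mul_left, qsum.tsum_eq, mul_one] at this
    have i2 : L * wSeq m ≤ ∑' n, L * wSeq n * q n := by
      have : ∑' n, L * wSeq m * q n ≤ ∑' n, L * wSeq n * q n := by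
        refine (qsum.summable.mul_left _).tsum_le_tsum (fun n => ?_) (hsw q q0 qsum.summable)
        by_cases hz : q n = 0
        · simp [hz]
        · refine mul_le_mul_of_nonneg_right (mul_le_mul_of_nonneg_left (wSeq_antitone ?_) hL) (q0 n)
          exact Nat.le_floor (qs n hz).2
      rwa [tsum_mul_left, qsum.tsum_eq, mul_one] at this
    have i3 : ∑' n, (u n - L * wSeq n) * q n = ∑' n, u n * q n - ∑' n, L * wSeq n * q n := by
      rw [← (hsu q q0 qsum.summable).tsum_sub (hsw q q0 qsum.summable)]
      simp_rw [sub_mul]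
    have i4 : Real.sqrt m / Real.sqrt b ≤ Real.sqrt N := by
      rw [div_le_iff₀ (Real.sqrt_pos.2 (by linarith)), ← Real.sqrt_mul (by positivity)]
      refine Real.sqrt_le_sqrt ?_
      rw [mul_comm]; exact Nat.floor_le (by positivity)
    have i5 : L * (Real.sqrt m * wSeq m) / Real.sqrt b ≤ Real.sqrt N * (L * wSeq m) := by
      have := mul_le_mul_of_nonneg_right i4 (mul_nonneg hL (wSeq_pos m).le)
      refine le_trans (le_of_eq ?_) this
      ring
    have i6 := mul_le_mul_of_nonneg_left (neg_abs_le (∑' n, (u n - L * wSeq n) * q n))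
      (Real.sqrt_nonneg N)
    have i7 : Real.sqrt N * (L * wSeq m + ∑' n, (u n - L * wSeq n) * q n) ≤ Real.sqrt N * u N :=
      mul_le_mul_of_nonneg_left (by linarith) (Real.sqrt_nonneg N)
    linarith
  · obtain ⟨a, ⟨ha0, ha1⟩, ha2⟩ : ∃ a : ℝ, (0 < a ∧ a < 1) ∧
        L / Real.sqrt Real.pi / Real.sqrt a < l := by
      have h1 := ((tendsto_order.1 hcont').2 l hl)
      have h2 : ∀ᶠ b : ℝ in nhdsWithin 1 (Set.Iio 1), _ := nhdsWithin_le_nhds h1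
      exact ((hev.and h2).exists)
    set ε := (l - L / Real.sqrt Real.pi / Real.sqrt a) / 2 with hε
    have hεp : 0 < ε := by rw [hε]; linarith
    have hfl : Tendsto (fun N : ℕ => ⌈a * N⌉₊) atTop atTop :=
      tendsto_nat_ceil_atTop.comp ((tendsto_natCast_atTop_atTop).const_mul_atTop (by linarith))
    have h3 := (hwl.comp hfl).div_const (Real.sqrt a)
    have h4 := (tendsto_order.1 h3).2 (l - ε) (by rw [hε]; linarith)
    filter_upwards [hkey ha0 ha1 hεp, h4] with N hq h4
    obtain ⟨q, q0, qs, qsum, qd⟩ := hq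
    simp only [Function.comp_apply] at h4
    set m := ⌈a * (N:ℝ)⌉₊ with hm
    have i1 : u N ≤ ∑' n, u n * q n := by
      have : ∑' n, u N * q n ≤ ∑' n, u n * q n := by
        refine (qsum.summable.mul_left _).tsum_le_tsum (fun n => ?_) (hsu q q0 qsum.summable)
        by_cases hz : q n = 0
        · simp [hz]
        · refine mul_le_mul_of_nonneg_right (hanti ?_) (q0 n)
          have := (qs n hz).2
          rw [one_mul] at this; exact_mod_cast this
      rwa [tsum_mul_left, qsum.tsum_eq, mul_one] at this
    have i2 : ∑' n, L * wSeq n * q n ≤ L * wSeq m := by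
      have : ∑' n, L * wSeq n * q n ≤ ∑' n, L * wSeq m * q n := by
        refine (hsw q q0 qsum.summable).tsum_le_tsum (fun n => ?_) (qsum.summable.mul_left _)
        by_cases hz : q n = 0
        · simp [hz]
        · refine mul_le_mul_of_nonneg_right (mul_le_mul_of_nonneg_left (wSeq_antitone ?_) hL) (q0 n)
          exact Nat.ceil_le.2 (qs n hz).1
      rwa [tsum_mul_left, qsum.tsum_eq, mul_one] at this
    have i3 : ∑' n, (u n - L * wSeq n) * q n = ∑' n, u n * q n - ∑' n, L * wSeq n * q n := by
      rw [← (hsu q q0 qsum.summable).tsum_sub (hsw q q0 qsum.summable)]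
      simp_rw [sub_mul]
    have i4 : Real.sqrt N ≤ Real.sqrt m / Real.sqrt a := by
      rw [le_div_iff₀ (Real.sqrt_pos.2 (by linarith)), ← Real.sqrt_mul (by positivity)]
      refine Real.sqrt_le_sqrt ?_
      rw [mul_comm]; exact Nat.le_ceil _
    have i5 : Real.sqrt N * (L * wSeq m) ≤ L * (Real.sqrt m * wSeq m) / Real.sqrt a := by
      have := mul_le_mul_of_nonneg_right i4 (mul_nonneg hL (wSeq_pos m).le)
      refine le_trans this (le_of_eq ?_)
      ring
    have i6 := mul_le_mul_of_nonneg_left (le_abs_self (∑' n, (u n - L * wSeq n) * q n))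
      (Real.sqrt_nonneg N)
    have i7 : Real.sqrt N * u N ≤ Real.sqrt N * (L * wSeq m + ∑' n, (u n - L * wSeq n) * q n) :=
      mul_le_mul_of_nonneg_left (by linarith) (Real.sqrt_nonneg N)
    linarith

section heat
variable {κ : ℤ → ℝ}

lemma cbar_pos (hκ : ∀ x, 0 < κ x) (x : ℤ) : 0 < cbar κ x := add_pos (hκ _) (hκ _)

lemma hk_zero (x : ℤ) : heatK κ 0 x = if x = 0 then 1 / cbar κ 0 else 0 := by
  unfold heatK walk
  split_ifs with h
  · rw [h]
  · simp

lemma hk_rec (hκ : ∀ x, 0 < κ x) (n : ℕ) (x : ℤ) :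
    cbar κ x * heatK κ (n+1) x = κ (x-1) * heatK κ n (x-1) + κ x * heatK κ n (x+1) := by
  have h1 := (cbar_pos hκ x).ne'
  have h2 := (cbar_pos hκ (x-1)).ne'
  have h3 := (cbar_pos hκ (x+1)).ne'
  have s1 : step κ (x-1) x = κ (x-1) / cbar κ (x-1) := by simp [step]
  have s2 : step κ (x+1) x = κ x / cbar κ (x+1) := by
    simp [step]; omega
  unfold heatK
  rw [walk, s1, s2]
  field_simp

lemma hk_nonneg (hκ : ∀ x, 0 < κ x) (n : ℕ) (x : ℤ) : 0 ≤ heatK κ n x := by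
  induction n generalizing x with
  | zero =>
    rw [hk_zero]; split_ifs
    · have := cbar_pos hκ 0; positivity
    · exact le_rfl
  | succ n ih =>
    have h1 := hk_rec hκ n x
    have h2 := mul_nonneg (hκ (x-1)).le (ih (x-1))
    have h3 := mul_nonneg (hκ x).le (ih (x+1))
    refine nonneg_of_mul_nonneg_right (b := heatK κ (n+1) x) (a := cbar κ x) ?_ (cbar_pos hκ x)
    linarith

lemma hk_le (hκ : ∀ x, 0 < κ x) (n : ℕ) (x : ℤ) : heatK κ n x ≤ 1 / cbar κ 0 := by
  induction n generalizing x with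
  | zero =>
    rw [hk_zero]; split_ifs
    · exact le_rfl
    · have := cbar_pos hκ 0; positivity
  | succ n ih =>
    have h1 := hk_rec hκ n x
    have h2 := mul_le_mul_of_nonneg_left (ih (x-1)) (hκ (x-1)).le
    have h3 := mul_le_mul_of_nonneg_left (ih (x+1)) (hκ x).le
    refine le_of_mul_le_mul_left (a := cbar κ x) ?_ (cbar_pos hκ x)
    have : cbar κ x * (1 / cbar κ 0) = κ (x-1) * (1 / cbar κ 0) + κ x * (1 / cbar κ 0) := by
      rw [← add_mul]; rfl
    linarith

lemma hk_supp (hκ : ∀ x, 0 < κ x) (n : ℕ) (x : ℤ) (h : (n:ℤ) < |x|) : heatK κ n x = 0 := by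
  induction n generalizing x with
  | zero =>
    rw [hk_zero, if_neg]; rintro rfl; simp at h
  | succ n ih =>
    have h1 := hk_rec hκ n x
    push_cast at h
    rw [ih (x-1) (by rw [lt_abs] at *; omega), ih (x+1) (by rw [lt_abs] at *; omega)] at h1
    simpa [(cbar_pos hκ x).ne'] using h1

lemma hk_parity (hκ : ∀ x, 0 < κ x) (n : ℕ) (x : ℤ) (h : ¬ Even ((n:ℤ) + x)) :
    heatK κ n x = 0 := by
  induction n generalizing x with
  | zero =>
    rw [hk_zero, if_neg]; rintro rfl; simp at h
  | succ n ih =>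
    have h1 := hk_rec hκ n x
    push_cast at h
    rw [ih (x-1) (by rw [Int.even_iff] at *; omega),
      ih (x+1) (by rw [Int.even_iff] at *; omega)] at h1
    simpa [(cbar_pos hκ x).ne'] using h1

lemma hk_summable (hκ : ∀ x, 0 < κ x) (n : ℕ) {F : ℤ → ℝ}
    (hF : ∀ x, heatK κ n x = 0 → F x = 0) : Summable F := by
  refine summable_of_hasFiniteSupport ((Set.finite_Icc (-(n:ℤ)) n).subset fun x hx => ?_)
  by_contra hcon
  refine hx (hF x (hk_supp hκ n x ?_))
  rw [Set.mem_Icc, ← abs_le] at hcon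
  exact not_le.1 hcon

lemma hk_summable_left (hκ : ∀ x, 0 < κ x) (n : ℕ) (k : ℤ) (G : ℤ → ℝ) :
    Summable (fun x => heatK κ n (x + k) * G x) := by
  have : Summable (fun x => heatK κ n x * G (x - k)) :=
    hk_summable hκ n (fun x hx => by rw [hx, zero_mul])
  have h2 := (Equiv.addRight k).summable_iff.2 this
  refine h2.congr fun x => ?_
  simp [Function.comp]

lemma tsum_shift (F : ℤ → ℝ) (k : ℤ) : ∑' x, F (x + k) = ∑' x, F x :=
  (Equiv.addRight k).tsum_eq F

lemma hk_ip_symm_aux (hκ : ∀ x, 0 < κ x) (a b : ℕ) :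
    ∑' x, cbar κ x * heatK κ a x * heatK κ (b+1) x =
      ∑' x, heatK κ a (x+1) * (κ x * heatK κ b x) + ∑' x, heatK κ a x * (κ x * heatK κ b (x+1)) := by
  have e1 : ∀ x, cbar κ x * heatK κ a x * heatK κ (b+1) x =
      heatK κ a x * (κ (x-1) * heatK κ b (x-1)) + heatK κ a x * (κ x * heatK κ b (x+1)) := by
    intro x
    have := hk_rec hκ b x
    linear_combination heatK κ a x * this
  simp_rw [e1]
  have s1 := hk_summable_left hκ a 0 (fun x => κ (x-1) * heatK κ b (x-1))
  have s2 := hk_summable_left hκ a 0 (fun x => κ x * heatK κ b (x+1))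
  simp only [add_zero] at s1 s2
  rw [s1.tsum_add s2]
  congr 1
  rw [← tsum_shift _ 1]
  simp

lemma hk_ip_symm (hκ : ∀ x, 0 < κ x) (a b : ℕ) :
    ∑' x, cbar κ x * heatK κ a x * heatK κ (b+1) x =
      ∑' x, cbar κ x * heatK κ (a+1) x * heatK κ b x := by
  have e : ∀ x, cbar κ x * heatK κ (a+1) x * heatK κ b x =
    cbar κ x * heatK κ b x * heatK κ (a+1) x := fun x => by ring
  simp_rw [e]
  rw [hk_ip_symm_aux hκ, hk_ip_symm_aux hκ, add_comm]
  congr 1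
  · exact tsum_congr fun x => by ring
  · exact tsum_congr fun x => by ring

lemma hk_ip (hκ : ∀ x, 0 < κ x) (a b : ℕ) :
    ∑' x, cbar κ x * heatK κ a x * heatK κ b x = heatK κ (a+b) 0 := by
  induction b generalizing a with
  | zero =>
    rw [tsum_eq_single 0]
    · rw [hk_zero, if_pos rfl]
      have := (cbar_pos hκ 0).ne'
      field_simp; simp
    · intro x hx
      rw [hk_zero, if_neg hx, mul_zero]
  | succ b ih =>
    rw [hk_ip_symm hκ, ih]; congr 1; ring

lemma hk_var (hκ : ∀ x, 0 < κ x) (n : ℕ) :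
    HasSum (fun x => κ (x-1) * κ x / cbar κ x * (heatK κ n (x+1) - heatK κ n (x-1)) ^ 2)
      (heatK κ (2 * n) 0 - heatK κ (2 * (n+1)) 0) := by
  set f := heatK κ n with hf
  have s1 : Summable (fun x => κ (x-1) * f (x-1) ^ 2) :=
    (hk_summable_left hκ n (-1) (fun x => κ (x-1) * f (x-1))).congr fun x => by
      rw [← sub_eq_add_neg]; ring
  have s2 : Summable (fun x => κ x * f (x+1) ^ 2) :=
    (hk_summable_left hκ n 1 (fun x => κ x * f (x+1))).congr fun x => by ring
  have s3 : Summable (fun x => κ x * f x ^ 2) :=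
    (hk_summable_left hκ n 0 (fun x => κ x * f x)).congr fun x => by simp [hf]; ring
  have s4 : Summable (fun x => κ (x-1) * f x ^ 2) :=
    (hk_summable_left hκ n 0 (fun x => κ (x-1) * f x)).congr fun x => by simp [hf]; ring
  have s5 : Summable (fun x => cbar κ x * heatK κ (n+1) x * heatK κ (n+1) x) :=
    hk_summable hκ (n+1) (fun x hx => by rw [hx, mul_zero])
  have t1 : ∑' x, κ (x-1) * f (x-1) ^ 2 = ∑' x, κ x * f x ^ 2 := by
    rw [← tsum_shift (fun x => κ x * f x ^ 2) (-1)]; rfl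
  have t2 : ∑' x, κ x * f (x+1) ^ 2 = ∑' x, κ (x-1) * f x ^ 2 := by
    rw [← tsum_shift (fun x => κ (x-1) * f x ^ 2) 1]; simp
  have t3 : ∑' x, κ (x-1) * f x ^ 2 + ∑' x, κ x * f x ^ 2 = heatK κ (2*n) 0 := by
    rw [← s4.tsum_add s3, two_mul, ← hk_ip hκ]
    exact tsum_congr fun x => by simp only [cbar, hf]; ring
  have t4 := hk_ip hκ (n+1) (n+1)
  rw [← two_mul] at t4
  have H := ((s1.hasSum.add s2.hasSum).sub s5.hasSum)
  rw [t1, t2, t4, add_comm (∑' x, κ x * f x ^ 2), t3] at H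
  refine H.congr_fun ?_
  intro x
  have hr := hk_rec hκ n x
  have hc := cbar_pos hκ x
  have hp : heatK κ (n+1) x = (κ (x-1) * f (x-1) + κ x * f (x+1)) / cbar κ x := by
    rw [eq_div_iff hc.ne', mul_comm]; exact hr
  rw [hp]
  field_simp
  simp only [cbar]; ring

lemma hk_antitone (hκ : ∀ x, 0 < κ x) : Antitone (fun n => heatK κ (2 * n) 0) := by
  refine antitone_nat_of_succ_le fun n => ?_
  have := (hk_var hκ n).nonneg fun x => by
    have := hκ (x-1); have := hκ x; have := cbar_pos hκ x; positivity
  linarith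

lemma hk_grad (hκ : ∀ x, 0 < κ x) (n : ℕ) (x : ℤ) :
    κ (x-1) * κ x / cbar κ x * (heatK κ n (x+1) - heatK κ n (x-1)) ^ 2 ≤
      heatK κ (2 * n) 0 - heatK κ (2 * (n+1)) 0 :=
  le_hasSum (hk_var hκ n) x fun x _ => by
    have := hκ (x-1); have := hκ x; have := cbar_pos hκ x; positivity

lemma hk_convex (hκ : ∀ x, 0 < κ x) (n : ℕ) :
    heatK κ (2 * (n+1)) 0 - heatK κ (2 * (n+2)) 0 ≤ heatK κ (2 * n) 0 - heatK κ (2 * (n+1)) 0 := by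
  have t1 := hk_ip hκ n n
  have t2 := hk_ip hκ n (n+2)
  have t3 := hk_ip hκ (n+2) (n+2)
  have s1 : Summable (fun x => cbar κ x * heatK κ n x * heatK κ n x) :=
    hk_summable hκ n (fun x hx => by rw [hx, mul_zero])
  have s2 : Summable (fun x => cbar κ x * heatK κ n x * heatK κ (n+2) x) :=
    hk_summable hκ n (fun x hx => by rw [hx]; ring)
  have s3 : Summable (fun x => cbar κ x * heatK κ (n+2) x * heatK κ (n+2) x) :=
    hk_summable hκ (n+2) (fun x hx => by rw [hx, mul_zero])
  have H := (s1.hasSum.sub (s2.hasSum.mul_left 2)).add s3.hasSum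
  rw [t1, t2, t3, ← two_mul, ← two_mul, show n + (n+2) = 2 * (n+1) by ring] at H
  have := H.nonneg fun x => by
    have hc := cbar_pos hκ x
    have e : cbar κ x * heatK κ n x * heatK κ n x - 2 * (cbar κ x * heatK κ n x * heatK κ (n+2) x)
      + cbar κ x * heatK κ (n+2) x * heatK κ (n+2) x =
        cbar κ x * (heatK κ n x - heatK κ (n+2) x) ^ 2 := by ring
    rw [e]; positivity
  linarith

/-- increments decay like `u_n / n` -/
lemma hk_incr (hκ : ∀ x, 0 < κ x) (n : ℕ) :
    n * (heatK κ (2 * (2 * n)) 0 - heatK κ (2 * (2 * n + 1)) 0) ≤ heatK κ (2 * n) 0 := by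
  set u : ℕ → ℝ := fun n => heatK κ (2 * n) 0 with hu
  have hv : Antitone (fun n => u n - u (n+1)) := antitone_nat_of_succ_le fun n => hk_convex hκ n
  have h1 : ∀ k, k ≤ n → k * (u (2*n) - u (2*n+1)) ≤ u n - u (n+k) := by
    intro k
    induction k with
    | zero => simp
    | succ k ih =>
      intro hk
      have h2 := ih (by omega)
      have h3 := hv (show n + k ≤ 2 * n by omega)
      simp only at h3
      push_cast
      rw [← add_assoc]
      linarith
  have h4 := h1 n le_rfl
  have h5 : 0 ≤ u (n+n) := hk_nonneg hκ _ _
  change n * (u (2*n) - u (2*n+1)) ≤ u n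
  linarith

/-- From the on-diagonal asymptotics to all even sites. -/
lemma hk_offdiag (hκ : ∀ x, 0 < κ x) {ℓ : ℝ}
    (h : Tendsto (fun n : ℕ => Real.sqrt n * heatK κ (2 * n) 0) atTop (nhds ℓ)) (x : ℤ)
    (hx : Even x) :
    Tendsto (fun n : ℕ => Real.sqrt (2 * n) * heatK κ (2 * n) x) atTop
      (nhds (Real.sqrt 2 * ℓ)) := by
  have hu0 : Tendsto (fun n : ℕ => heatK κ (2 * n) 0) atTop (nhds 0) := by
    have h1 : Tendsto (fun n : ℕ => Real.sqrt n) atTop atTop :=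
      Real.tendsto_sqrt_atTop.comp tendsto_natCast_atTop_atTop
    have h2 := h.div_atTop h1
    refine h2.congr' ?_
    filter_upwards [eventually_gt_atTop 0] with n hn
    have : Real.sqrt n ≠ 0 := (Real.sqrt_pos.2 (by exact_mod_cast hn)).ne'
    field_simp
  have hdiff : ∀ y : ℤ, Tendsto (fun n : ℕ => Real.sqrt (2 * n) *
      (heatK κ (2 * n) (y+1) - heatK κ (2 * n) (y-1))) atTop (nhds 0) := by
    intro y
    set w := κ (y-1) * κ y / cbar κ y with hw
    have hwp : 0 < w := by
      have := hκ (y-1); have := hκ y; have := cbar_pos hκ y; positivity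
    have h3 : Tendsto (fun n : ℕ => Real.sqrt (2 / w * heatK κ (2 * n) 0)) atTop (nhds 0) := by
      have := (Real.continuous_sqrt.tendsto _).comp (hu0.const_mul (2 / w))
      simpa [Function.comp_def] using this
    refine squeeze_zero_norm (fun n => ?_) h3
    rw [Real.norm_eq_abs]
    refine Real.abs_le_sqrt ?_
    rw [mul_pow, Real.sq_sqrt (by positivity)]
    have h4 := hk_grad hκ (2*n) y
    have h5 := hk_incr hκ n
    rw [← hw] at h4
    have h6 := mul_le_mul_of_nonneg_left h4 (Nat.cast_nonneg (α := ℝ) n)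
    rw [div_mul_eq_mul_div, le_div_iff₀ hwp]
    nlinarith
  have h0 : Tendsto (fun n : ℕ => Real.sqrt (2 * n) * heatK κ (2 * n) 0) atTop
      (nhds (Real.sqrt 2 * ℓ)) := by
    refine (h.const_mul (Real.sqrt 2)).congr fun n => ?_
    rw [Real.sqrt_mul (by norm_num)]; ring
  have hall : ∀ k : ℤ, Tendsto (fun n : ℕ => Real.sqrt (2 * n) * heatK κ (2 * n) (k + k)) atTop
      (nhds (Real.sqrt 2 * ℓ)) := by
    intro k
    induction k using Int.induction_on with
    | zero => simpa using h0
    | succ i ih =>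
      have := ih.add (hdiff ((i:ℤ) + i + 1))
      rw [add_zero] at this
      refine this.congr fun n => ?_
      rw [show (i:ℤ) + i + 1 - 1 = i + i by ring, show (i:ℤ) + i + 1 + 1 = i + 1 + (i + 1) by ring]
      ring
    | pred i ih =>
      have := ih.sub (hdiff (-(i:ℤ) + -i - 1))
      rw [sub_zero] at this
      refine this.congr fun n => ?_
      rw [show -(i:ℤ) + -i - 1 - 1 = -i - 1 + (-i - 1) by ring,
        show -(i:ℤ) + -i - 1 + 1 = -i + -i by ring]
      ring
  obtain ⟨k, rfl⟩ := hx
  exact hall k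

end heat

section resolvent
variable {κ : ℤ → ℝ}

/-- The resolvent `g_z(x) = Σ z^n h_n(x)`. -/
noncomputable def resol (κ : ℤ → ℝ) (z : ℝ) (x : ℤ) : ℝ := ∑' n : ℕ, z ^ n * heatK κ n x

lemma resol_summable (hκ : ∀ x, 0 < κ x) {z : ℝ} (h0 : 0 < z) (h1 : z < 1) (x : ℤ) :
    Summable (fun n : ℕ => z ^ n * heatK κ n x) :=
  Summable.of_nonneg_of_le (fun n => mul_nonneg (by positivity) (hk_nonneg hκ n x))
    (fun n => mul_le_mul_of_nonneg_left (hk_le hκ n x) (by positivity))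
    ((summable_geometric_of_lt_one h0.le h1).mul_right _)

lemma resol_nonneg (hκ : ∀ x, 0 < κ x) {z : ℝ} (h0 : 0 < z) (x : ℤ) : 0 ≤ resol κ z x :=
  tsum_nonneg fun n => mul_nonneg (by positivity) (hk_nonneg hκ n x)

lemma resol_le (hκ : ∀ x, 0 < κ x) {z : ℝ} (h0 : 0 < z) (h1 : z < 1) (x : ℤ) :
    resol κ z x ≤ ∑' n : ℕ, z ^ n * (1 / cbar κ 0) :=
  (resol_summable hκ h0 h1 x).tsum_le_tsum
    (fun n => mul_le_mul_of_nonneg_left (hk_le hκ n x) (by positivity))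
    ((summable_geometric_of_lt_one h0.le h1).mul_right _)

lemma resol_eq (hκ : ∀ x, 0 < κ x) {z : ℝ} (h0 : 0 < z) (h1 : z < 1) (x : ℤ) :
    cbar κ x * resol κ z x =
      z * (κ (x-1) * resol κ z (x-1) + κ x * resol κ z (x+1)) + if x = 0 then 1 else 0 := by
  have hs := resol_summable hκ h0 h1
  unfold resol
  rw [(hs x).tsum_eq_zero_add, mul_add, add_comm]
  congr 1
  · rw [← tsum_mul_left, ← tsum_mul_left, ← tsum_mul_left,
      ← ((hs (x-1)).mul_left _).tsum_add ((hs (x+1)).mul_left _), ← tsum_mul_left]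
    refine tsum_congr fun n => ?_
    have := hk_rec hκ n x
    linear_combination z ^ (n+1) * this
  · rw [hk_zero]
    have := (cbar_pos hκ 0).ne'
    split_ifs with h
    · subst h; field_simp
    · simp

lemma hk_mass (hκ : ∀ x, 0 < κ x) (n : ℕ) : HasSum (fun x => cbar κ x * heatK κ n x) 1 := by
  induction n with
  | zero =>
    have := hasSum_ite_eq (0:ℤ) (1:ℝ)
    refine this.congr_fun fun x => ?_
    rw [hk_zero]
    have := (cbar_pos hκ 0).ne'
    split_ifs with h
    · subst h; field_simp
    · simp
  | succ n ih =>
    have s1 : Summable (fun x => κ x * heatK κ n x) := hk_summable hκ n fun x hx => by simp [hx]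
    have s2 : Summable (fun x => κ (x-1) * heatK κ n x) := hk_summable hκ n fun x hx => by simp [hx]
    have t := ih.tsum_eq
    have e : ∀ x, cbar κ x * heatK κ n x = κ (x-1) * heatK κ n x + κ x * heatK κ n x := fun x => by
      rw [cbar]; ring
    simp_rw [e] at t
    rw [s2.tsum_add s1] at t
    have H1 := (Equiv.addRight (-1:ℤ)).hasSum_iff.2 s1.hasSum
    have H2 := (Equiv.addRight (1:ℤ)).hasSum_iff.2 s2.hasSum
    have H := H2.add H1
    rw [t] at H
    refine H.congr_fun fun x => ?_
    rw [hk_rec hκ]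
    simp [← sub_eq_add_neg]
    ring

lemma resol_mass (hκ : ∀ x, 0 < κ x) {z : ℝ} (h0 : 0 < z) (h1 : z < 1) :
    Summable (fun x => cbar κ x * resol κ z x) := by
  have hnn : ∀ (n : ℕ) (x : ℤ), 0 ≤ z ^ n * (cbar κ x * heatK κ n x) := fun n x =>
    mul_nonneg (by positivity) (mul_nonneg (cbar_pos hκ x).le (hk_nonneg hκ n x))
  have hF : Summable (fun p : ℕ × ℤ => z ^ p.1 * (cbar κ p.2 * heatK κ p.1 p.2)) := by
    have e : ∀ n : ℕ, HasSum (fun x : ℤ => z ^ n * (cbar κ x * heatK κ n x)) (z ^ n) := fun n => by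
      have := (hk_mass hκ n).mul_left (z ^ n)
      rwa [mul_one] at this
    revert hnn e
    generalize hG : (fun (n : ℕ) (x : ℤ) => z ^ n * (cbar κ x * heatK κ n x)) = G
    have hG' : ∀ n x, z ^ n * (cbar κ x * heatK κ n x) = G n x := fun n x => by rw [← hG]
    simp only [hG']
    intro hnn e
    refine (summable_prod_of_nonneg (f := fun p : ℕ × ℤ => G p.1 p.2) (fun p => hnn p.1 p.2)).2
      ⟨fun n => (e n).summable, ?_⟩
    have e' : (fun n : ℕ => ∑' x, G n x) = fun n => z ^ n := funext fun n => (e n).tsum_eq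
    exact e' ▸ summable_geometric_of_lt_one h0.le h1
  have := hF.prod_symm.prod
  refine this.congr fun x => ?_
  simp only [Prod.swap]
  unfold resol
  rw [← tsum_mul_left]
  exact tsum_congr fun n => by ring

lemma resol_zero (hκ : ∀ x, 0 < κ x) {z : ℝ} (h0 : 0 < z) (h1 : z < 1) :
    resol κ z 0 = ∑' n : ℕ, heatK κ (2 * n) 0 * (z ^ 2) ^ n := by
  have hs := resol_summable hκ h0 h1 0
  unfold resol
  have hodd : ∀ k : ℕ, z ^ (2*k+1) * heatK κ (2*k+1) 0 = 0 := fun k => by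
    rw [hk_parity hκ (2*k+1) 0, mul_zero]
    rw [Int.even_iff]; push_cast; omega
  have := tsum_even_add_odd (f := fun n : ℕ => z ^ n * heatK κ n 0)
    (hs.comp_injective (mul_right_injective₀ two_ne_zero))
    (by simp_rw [hodd]; exact summable_zero)
  rw [← this]
  simp_rw [hodd]
  rw [tsum_zero, add_zero]
  exact tsum_congr fun n => by rw [pow_mul]; ring

lemma resol_pos (hκ : ∀ x, 0 < κ x) {z : ℝ} (h0 : 0 < z) (h1 : z < 1) : 0 < resol κ z 0 := by
  refine (resol_summable hκ h0 h1 0).tsum_pos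
    (fun n => mul_nonneg (by positivity) (hk_nonneg hκ n 0)) 0 ?_
  rw [hk_zero]
  have := cbar_pos hκ 0
  simp [this]

lemma HasSum.congr_val {ι : Type*} {f : ι → ℝ} {a b : ℝ} (h : HasSum f a) (e : a = b) :
    HasSum f b := e ▸ h

lemma form_hasSum (hκ : ∀ x, 0 < κ x) {z : ℝ} (h0 : 0 < z) (h1 : z < 1) {f : ℤ → ℝ} {M : ℝ}
    (hf : ∀ x, |f x| ≤ M) :
    HasSum (fun x => z * (κ x * (f (x+1) - f x) * (resol κ z (x+1) - resol κ z x))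
      + (1 - z) * (cbar κ x * f x * resol κ z x)) (f 0) := by
  set g := resol κ z with hg
  have hg0 : ∀ x, 0 ≤ g x := resol_nonneg hκ h0
  have hm : Summable (fun x => cbar κ x * g x) := resol_mass hκ h0 h1
  have b1 : ∀ x, κ x ≤ cbar κ x := fun x => by rw [cbar]; linarith [hκ (x-1)]
  have b2 : ∀ x, κ (x-1) ≤ cbar κ x := fun x => by rw [cbar]; linarith [hκ x]
  have hM : 0 ≤ M := (abs_nonneg _).trans (hf 0)
  have base : ∀ (k : ℤ → ℝ) (y : ℤ → ℤ), (∀ x, 0 < k x) → (∀ x, k x ≤ cbar κ x) →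
      Summable (fun x => k x * f (y x) * g x) := by
    intro k y hk0 hk
    refine Summable.of_norm_bounded (hm.mul_left M) fun x => ?_
    rw [Real.norm_eq_abs, abs_mul, abs_mul, abs_of_pos (hk0 x), abs_of_nonneg (hg0 x)]
    have i1 := mul_le_mul (hk x) (hf (y x)) (abs_nonneg _) (cbar_pos hκ x).le
    have := mul_le_mul_of_nonneg_right i1 (hg0 x)
    linarith
  have sA := base κ (fun x => x) hκ b1
  have sA' := base (fun x => κ (x-1)) (fun x => x) (fun x => hκ _) b2
  have sC := base κ (fun x => x+1) hκ b1
  have sD' := base (fun x => κ (x-1)) (fun x => x-1) (fun x => hκ _) b2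
  have HA' := (Equiv.addRight (1:ℤ)).hasSum_iff.2 sA'.hasSum
  have HD := (Equiv.addRight (1:ℤ)).hasSum_iff.2 sD'.hasSum
  have HC := (Equiv.addRight (-1:ℤ)).hasSum_iff.2 sC.hasSum
  have HA := sA.hasSum
  have H1 := (((HA'.add HA).sub (sC.hasSum.add HD)).mul_left z).add
    ((HA.add sA'.hasSum).mul_left (1-z))
  have H2 := (HA.add sA'.hasSum).sub ((HC.add HD).mul_left z)
  have H3 : HasSum (fun x : ℤ => if x = 0 then f 0 else 0) (f 0) := hasSum_ite_eq 0 (f 0)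
  have e := H2.unique (H3.congr_fun fun x => ?_)
  · have H4 := H1.congr_fun (g := fun x => z * (κ x * (f (x+1) - f x) * (g (x+1) - g x))
      + (1 - z) * (cbar κ x * f x * g x)) fun x => by
        simp only [Function.comp_apply, Equiv.coe_addRight, add_sub_cancel_right, cbar]
        ring
    refine HasSum.congr_val H4 ?_
    rw [← e]
    ring
  · simp only [Function.comp_apply, Equiv.coe_addRight, add_sub_cancel_right, ← sub_eq_add_neg,
      sub_add_cancel]
    have := resol_eq hκ h0 h1 x
    rw [← hg] at this
    split_ifs at this ⊢ with hx
    · subst hx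
      simp only [cbar] at this
      linear_combination f 0 * this
    · simp only [cbar] at this
      linear_combination f x * this

lemma energy_hasSum (hκ : ∀ x, 0 < κ x) {z : ℝ} (h0 : 0 < z) (h1 : z < 1) :
    HasSum (fun x => z * (κ x * (resol κ z (x+1) - resol κ z x) * (resol κ z (x+1) - resol κ z x))
      + (1 - z) * (cbar κ x * resol κ z x * resol κ z x)) (resol κ z 0) :=
  form_hasSum hκ h0 h1 (M := ∑' n : ℕ, z ^ n * (1 / cbar κ 0)) fun x => by
    rw [abs_of_nonneg (resol_nonneg hκ h0 x)]; exact resol_le hκ h0 h1 x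

/-- Dirichlet principle: lower bound on the resolvent. -/
lemma dirichlet (hκ : ∀ x, 0 < κ x) {z : ℝ} (h0 : 0 < z) (h1 : z < 1) {f : ℤ → ℝ} {M S : ℝ}
    (hf : ∀ x, |f x| ≤ M) (hf0 : f 0 = 1)
    (hS : HasSum (fun x => z * (κ x * (f (x+1) - f x) ^ 2) + (1 - z) * (cbar κ x * f x ^ 2)) S) :
    1 ≤ S * resol κ z 0 := by
  have hg := resol_pos hκ h0 h1
  have H1 := form_hasSum hκ h0 h1 hf
  have H2 := energy_hasSum hκ h0 h1
  set t := 1 / resol κ z 0 with ht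
  have H := (hS.sub (H1.mul_left (2 * t))).add (H2.mul_left (t ^ 2))
  have := H.nonneg fun x => by
    have hc := cbar_pos hκ x
    have hk := hκ x
    have hz : 0 < 1 - z := by linarith
    have : 0 ≤ z * (κ x * ((f (x+1) - f x) - t * (resol κ z (x+1) - resol κ z x)) ^ 2)
      + (1 - z) * (cbar κ x * (f x - t * resol κ z x) ^ 2) := by positivity
    linarith
  rw [hf0] at this
  have e : S - 2 * t * 1 + t ^ 2 * resol κ z 0 = S - 1 / resol κ z 0 := by
    rw [ht]; field_simp; ring
  rw [e, sub_nonneg, div_le_iff₀ hg] at this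
  exact this

/-- Thomson principle: upper bound on the resolvent. -/
lemma thomson (hκ : ∀ x, 0 < κ x) {z : ℝ} (h0 : 0 < z) (h1 : z < 1) {θ k : ℤ → ℝ} {S : ℝ}
    (hθ : Summable θ) (hk : ∀ x, k x = (if x = 0 then 1 else 0) - θ x + θ (x-1))
    (hS : HasSum (fun x => (1 / z) * ((1 / κ x) * θ x ^ 2)
      + (1 / (1 - z)) * (k x ^ 2 / cbar κ x)) S) :
    resol κ z 0 ≤ S := by
  have H2 := energy_hasSum hκ h0 h1
  set g := resol κ z with hg
  have hgb : ∃ K, ∀ x, |g x| ≤ K := ⟨_, fun x => by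
    rw [abs_of_nonneg (resol_nonneg hκ h0 x)]; exact resol_le hκ h0 h1 x⟩
  obtain ⟨K, hK⟩ := hgb
  have base : ∀ y : ℤ → ℤ, Summable (fun x => θ x * g (y x)) := fun y => by
    refine Summable.of_norm_bounded (hθ.abs.mul_right K) fun x => ?_
    rw [Real.norm_eq_abs, abs_mul]
    exact mul_le_mul_of_nonneg_left (hK _) (abs_nonneg _)
  have s1 := base (fun x => x)
  have s2 := base (fun x => x + 1)
  have s2' := (Equiv.addRight (-1:ℤ)).hasSum_iff.2 s2.hasSum
  have H3 : HasSum (fun x : ℤ => if x = 0 then g 0 else 0) (g 0) := hasSum_ite_eq 0 (g 0)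
  have H4 := (H3.sub s1.hasSum).add s2'
  have H5 := (s1.hasSum.sub s2.hasSum).add H4
  have H6 := (hS.add H2).sub (H5.mul_left 2)
  have := H6.nonneg fun x => by
    have hc := cbar_pos hκ x
    have hkx := hκ x
    have hz : 0 < 1 - z := by linarith
    have e1 : (if x = 0 then g 0 else 0) = (if x = 0 then 1 else 0) * g x := by
      split_ifs with h
      · subst h; simp
      · simp
    simp only [Function.comp_apply, Equiv.coe_addRight, ← sub_eq_add_neg, sub_add_cancel]
    rw [e1]
    have e2 : (if x = 0 then (1:ℝ) else 0) = k x + θ x - θ (x-1) := by rw [hk]; ring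
    rw [e2]
    have i1 : 0 ≤ (1 / (z * κ x)) * (θ x + z * κ x * (g (x+1) - g x)) ^ 2 := by positivity
    have i2 : 0 ≤ (1 / ((1 - z) * cbar κ x)) * (k x - (1 - z) * cbar κ x * g x) ^ 2 := by positivity
    have j1 : (1 / (z * κ x)) * (θ x + z * κ x * (g (x+1) - g x)) ^ 2 =
      (1 / z) * ((1 / κ x) * θ x ^ 2) + 2 * θ x * (g (x+1) - g x) +
        z * (κ x * (g (x+1) - g x) * (g (x+1) - g x)) := by field_simp; ring
    have j2 : (1 / ((1 - z) * cbar κ x)) * (k x - (1 - z) * cbar κ x * g x) ^ 2 =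
      (1 / (1 - z)) * (k x ^ 2 / cbar κ x) - 2 * k x * g x +
        (1 - z) * (cbar κ x * g x * g x) := by field_simp; ring
    rw [j1] at i1
    rw [j2] at i2
    linarith
  linarith

end resolvent

section halfline

lemma exp_gap {y : ℝ} (hy : 0 ≤ y) : 2 * (1 - Real.exp (-y)) ≤ y * (1 + Real.exp (-y)) := by
  have hd : ∀ y : ℝ, HasDerivAt (fun y : ℝ => y * (1 + Real.exp (-y)) - 2 * (1 - Real.exp (-y)))
      (1 - (1 + y) * Real.exp (-y)) y := fun y => by
    have h1 : HasDerivAt (fun y : ℝ => Real.exp (-y)) (-Real.exp (-y)) y := by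
      simpa using (hasDerivAt_neg y).exp
    have h2 := ((hasDerivAt_id y).mul (h1.const_add 1)).sub ((h1.const_sub 1).const_mul 2)
    refine h2.congr_deriv ?_
    simp only [id]
    ring
  have hm : MonotoneOn (fun y : ℝ => y * (1 + Real.exp (-y)) - 2 * (1 - Real.exp (-y)))
      (Set.Ici 0) := by
    refine monotoneOn_of_deriv_nonneg (convex_Ici 0) (fun y _ => (hd y).continuousAt.continuousWithinAt)
      (fun y _ => (hd y).differentiableAt.differentiableWithinAt) fun y hy => ?_
    rw [(hd y).deriv]
    have h1 := Real.add_one_le_exp y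
    have h2 : Real.exp y * Real.exp (-y) = 1 := by rw [← Real.exp_add]; simp
    nlinarith [Real.exp_pos (-y)]
  have := hm (Set.mem_Ici.2 le_rfl) (Set.mem_Ici.2 hy) hy
  simp at this
  linarith

lemma exp_sq_gap {p q : ℝ} (h : p ≤ q) : (Real.exp (-p) - Real.exp (-q)) ^ 2
    ≤ (q - p) / 2 * (Real.exp (-p) ^ 2 - Real.exp (-q) ^ 2) := by
  have hg := exp_gap (sub_nonneg.2 h)
  have e : Real.exp (-q) = Real.exp (-p) * Real.exp (-(q - p)) := by
    rw [← Real.exp_add]; congr 1; ring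
  have ht : Real.exp (-(q - p)) ≤ 1 := Real.exp_le_one_iff.2 (by linarith)
  rw [e]
  set t := Real.exp (-(q-p))
  have h1 : 0 ≤ Real.exp (-p) ^ 2 * (1 - t) := mul_nonneg (sq_nonneg _) (by linarith)
  nlinarith [mul_le_mul_of_nonneg_left hg h1]

/-- Telescoping bound. -/
lemma tele {r : ℕ → ℝ} (hr : ∀ n, 0 < r n) {α : ℝ} (hα : 0 < α) :
    Summable (fun n => (Real.exp (-(α * ∑ k ∈ Finset.range n, r k))
      - Real.exp (-(α * ∑ k ∈ Finset.range (n+1), r k))) ^ 2 / r n) ∧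
    ∑' n, (Real.exp (-(α * ∑ k ∈ Finset.range n, r k))
      - Real.exp (-(α * ∑ k ∈ Finset.range (n+1), r k))) ^ 2 / r n ≤ α / 2 := by
  have hnn : ∀ n, 0 ≤ (Real.exp (-(α * ∑ k ∈ Finset.range n, r k))
      - Real.exp (-(α * ∑ k ∈ Finset.range (n+1), r k))) ^ 2 / r n := fun n =>
    div_nonneg (sq_nonneg _) (hr n).le
  have hb : ∀ N, ∑ n ∈ Finset.range N, (Real.exp (-(α * ∑ k ∈ Finset.range n, r k))
      - Real.exp (-(α * ∑ k ∈ Finset.range (n+1), r k))) ^ 2 / r n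
      ≤ α / 2 * (1 - Real.exp (-(α * ∑ k ∈ Finset.range N, r k)) ^ 2) := by
    intro N
    induction N with
    | zero => simp
    | succ N ih =>
      rw [Finset.sum_range_succ]
      have h1 := exp_sq_gap (p := α * ∑ k ∈ Finset.range N, r k)
        (q := α * ∑ k ∈ Finset.range (N+1), r k) (by
          rw [Finset.sum_range_succ]; nlinarith [mul_pos hα (hr N)])
      have h2 : α * ∑ k ∈ Finset.range (N+1), r k - α * ∑ k ∈ Finset.range N, r k = α * r N := by
        rw [Finset.sum_range_succ]; ring
      rw [h2] at h1
      have h3 := div_le_div_of_nonneg_right h1 (hr N).le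
      have h4 : α * r N / 2 * (Real.exp (-(α * ∑ k ∈ Finset.range N, r k)) ^ 2
        - Real.exp (-(α * ∑ k ∈ Finset.range (N+1), r k)) ^ 2) / r N
        = α / 2 * (Real.exp (-(α * ∑ k ∈ Finset.range N, r k)) ^ 2
        - Real.exp (-(α * ∑ k ∈ Finset.range (N+1), r k)) ^ 2) := by
        have := (hr N).ne'
        field_simp
      rw [h4] at h3
      linarith
  have hb' : ∀ N, ∑ n ∈ Finset.range N, (Real.exp (-(α * ∑ k ∈ Finset.range n, r k))
      - Real.exp (-(α * ∑ k ∈ Finset.range (n+1), r k))) ^ 2 / r n ≤ α / 2 := fun N =>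
    (hb N).trans (by nlinarith [sq_nonneg (Real.exp (-(α * ∑ k ∈ Finset.range N, r k)))])
  exact ⟨summable_of_sum_range_le hnn hb', Real.tsum_le_of_sum_range_le hnn hb'⟩

lemma abel_bound {m : ℕ → ℝ} {a C s : ℝ} (hs0 : 0 ≤ s) (hs1 : s ≤ 1)
    (h : ∀ N : ℕ, ∑ k ∈ Finset.range N, m k ≤ a * N + C) (N : ℕ) :
    ∑ k ∈ Finset.range N, m k * s ^ k + (C + a * N - ∑ k ∈ Finset.range N, m k) * s ^ N
      ≤ C + a * ∑ k ∈ Finset.range N, s ^ k := by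
  induction N with
  | zero => simp
  | succ N ih =>
    have h1 := h (N+1)
    simp only [Finset.sum_range_succ] at h1 ⊢
    push_cast at h1 ⊢
    have hp : 0 ≤ s ^ N := by positivity
    rw [pow_succ]
    have h2 : 0 ≤ (C + a * (N + 1) - (∑ k ∈ Finset.range N, m k + m N)) * (1 - s) * s ^ N :=
      mul_nonneg (mul_nonneg (by linarith) (by linarith)) hp
    nlinarith

lemma halfsum {m R : ℕ → ℝ} {a b C₁ C₂ α : ℝ} (hm : ∀ n, 0 ≤ m n) (ha : 0 ≤ a) (hb : 0 < b)
    (hα : 0 < α) (h1 : ∀ N : ℕ, ∑ k ∈ Finset.range N, m k ≤ a * N + C₁)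
    (h2 : ∀ n : ℕ, b * n - C₂ ≤ R n) :
    Summable (fun n => m n * Real.exp (-(α * R n))) ∧
    α * ∑' n, m n * Real.exp (-(α * R n))
      ≤ Real.exp (α * C₂) * (α * C₁ + a * (1 + α * b) / b) := by
  set s := Real.exp (-(α * b)) with hs
  have hab : 0 < α * b := mul_pos hα hb
  have hs0 : 0 < s := Real.exp_pos _
  have hs1 : 1 - s ≥ α * b / (1 + α * b) := by
    have e1 : Real.exp (α * b) * s = 1 := by rw [hs, ← Real.exp_add]; simp
    have e2 := Real.add_one_le_exp (α * b)
    rw [ge_iff_le, div_le_iff₀ (by positivity)]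
    nlinarith
  have hsp : 0 < α * b / (1 + α * b) := by positivity
  have hs1' : s < 1 := by linarith
  have hnn : ∀ n, 0 ≤ m n * Real.exp (-(α * R n)) := fun n => mul_nonneg (hm n) (Real.exp_pos _).le
  have hgeo : ∀ N, ∑ k ∈ Finset.range N, s ^ k ≤ (1 + α * b) / (α * b) := fun N => by
    have e1 : ∑ k ∈ Finset.range N, s ^ k ≤ (1 - s)⁻¹ := by
      rw [← tsum_geometric_of_lt_one hs0.le hs1']
      exact (summable_geometric_of_lt_one hs0.le hs1').sum_le_tsum _ fun i _ => by positivity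
    refine e1.trans ?_
    rw [← one_div_div, ← one_div]
    exact one_div_le_one_div_of_le hsp hs1
  have hbd : ∀ N, ∑ n ∈ Finset.range N, m n * Real.exp (-(α * R n))
      ≤ Real.exp (α * C₂) * (C₁ + a * ((1 + α * b) / (α * b))) := fun N => by
    have i1 : ∑ n ∈ Finset.range N, m n * Real.exp (-(α * R n))
        ≤ ∑ n ∈ Finset.range N, Real.exp (α * C₂) * (m n * s ^ n) := by
      refine Finset.sum_le_sum fun n _ => ?_
      have : Real.exp (-(α * R n)) ≤ Real.exp (α * C₂) * s ^ n := by
        rw [hs, ← Real.exp_nat_mul, ← Real.exp_add]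
        refine Real.exp_le_exp.2 ?_
        nlinarith [mul_le_mul_of_nonneg_left (h2 n) hα.le]
      calc _ ≤ m n * (Real.exp (α * C₂) * s ^ n) := mul_le_mul_of_nonneg_left this (hm n)
        _ = _ := by ring
    rw [← Finset.mul_sum] at i1
    refine i1.trans (mul_le_mul_of_nonneg_left ?_ (Real.exp_pos _).le)
    have i2 := abel_bound hs0.le hs1'.le h1 N
    have i3 : 0 ≤ (C₁ + a * N - ∑ k ∈ Finset.range N, m k) * s ^ N :=
      mul_nonneg (by linarith [h1 N]) (by positivity)
    have i4 := mul_le_mul_of_nonneg_left (hgeo N) ha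
    linarith
  refine ⟨summable_of_sum_range_le hnn hbd, ?_⟩
  have := mul_le_mul_of_nonneg_left (Real.tsum_le_of_sum_range_le hnn hbd) hα.le
  refine this.trans (le_of_eq ?_)
  field_simp

lemma halflim {m R : ℕ → ℝ} {a b ε : ℝ} (hm : ∀ n, 0 ≤ m n) (ha : 0 ≤ a) (hb : 0 < b)
    (hε : 0 < ε)
    (h1 : ∀ a' > a, ∃ C, ∀ N : ℕ, ∑ k ∈ Finset.range N, m k ≤ a' * N + C)
    (h2 : ∀ b' < b, ∃ C, ∀ n : ℕ, b' * n - C ≤ R n) :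
    ∀ᶠ α in nhdsWithin (0:ℝ) (Set.Ioi 0), 0 < α ∧ Summable (fun n => m n * Real.exp (-(α * R n))) ∧
      α * ∑' n, m n * Real.exp (-(α * R n)) ≤ a / b + ε := by
  have hδ : ∃ δ > 0, δ < b ∧ (a + δ) / (b - δ) < a / b + ε := by
    have t : ContinuousAt (fun δ : ℝ => (a + δ) / (b - δ)) 0 := by
      refine ContinuousAt.div (by fun_prop) (by fun_prop) ?_
      simpa using hb.ne'
    have t1 := t.eventually_lt_const (u := a / b + ε) (by simpa using hε)
    have t2 := (t1.filter_mono (nhdsWithin_le_nhds (s := Set.Ioi 0))).and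
      (Ioo_mem_nhdsGT hb)
    obtain ⟨δ, h, h'⟩ := t2.exists
    exact ⟨δ, h'.1, h'.2, h⟩
  obtain ⟨δ, hδ0, hδb, hδ⟩ := hδ
  obtain ⟨C₁, hC₁⟩ := h1 (a + δ) (by linarith)
  obtain ⟨C₂, hC₂⟩ := h2 (b - δ) (by linarith)
  have t : ContinuousAt (fun α : ℝ => Real.exp (α * C₂) *
      (α * C₁ + (a + δ) * (1 + α * (b - δ)) / (b - δ))) 0 := by
    fun_prop
  have t1 := t.eventually_lt_const (u := a / b + ε) (by simpa using hδ)
  filter_upwards [t1.filter_mono (nhdsWithin_le_nhds (s := Set.Ioi 0)), self_mem_nhdsWithin]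
    with α h hα
  have := halfsum hm (by linarith : 0 ≤ a + δ) (by linarith : 0 < b - δ) hα hC₁ hC₂
  exact ⟨hα, this.1, this.2.trans h.le⟩

end halfline

section bounds

/-- Asymptotic upper linear bound for partial sums. -/
def LinUp (p : ℕ → ℝ) (a : ℝ) : Prop :=
  ∀ a' > a, ∃ C, ∀ N : ℕ, ∑ k ∈ Finset.range N, p k ≤ a' * N + C

/-- Asymptotic lower linear bound for partial sums. -/
def LinLo (p : ℕ → ℝ) (a : ℝ) : Prop :=
  ∀ a' < a, ∃ C, ∀ N : ℕ, a' * N - C ≤ ∑ k ∈ Finset.range N, p k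

lemma LinLo.shift {p : ℕ → ℝ} {a : ℝ} (h : LinLo p a) : LinLo (fun n => p (n+1)) a := by
  intro a' ha'
  obtain ⟨C, hC⟩ := h a' ha'
  refine ⟨C + p 0 + |a'|, fun N => ?_⟩
  have := hC (N+1)
  rw [Finset.sum_range_succ'] at this
  push_cast at this
  linarith [neg_abs_le a']

lemma halflim_sq {m R : ℕ → ℝ} {a b ε : ℝ} (hm : ∀ n, 0 ≤ m n) (ha : 0 ≤ a) (hb : 0 < b)
    (hε : 0 < ε) (h1 : LinUp m a) (h2 : ∀ b' < b, ∃ C, ∀ n : ℕ, b' * n - C ≤ R n) :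
    ∀ᶠ α in nhdsWithin (0:ℝ) (Set.Ioi 0), 0 < α ∧
      Summable (fun n => m n * Real.exp (-(α * R n)) ^ 2) ∧
      α * ∑' n, m n * Real.exp (-(α * R n)) ^ 2 ≤ (a / b + ε) / 2 := by
  have t : Tendsto (fun α : ℝ => 2 * α) (nhdsWithin 0 (Set.Ioi 0)) (nhdsWithin 0 (Set.Ioi 0)) := by
    refine tendsto_nhdsWithin_iff.2 ⟨?_, ?_⟩
    · have : Tendsto (fun α : ℝ => 2 * α) (nhds 0) (nhds (2 * 0)) :=
        (continuous_const.mul continuous_id).tendsto 0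
      rw [mul_zero] at this
      exact this.mono_left nhdsWithin_le_nhds
    · filter_upwards [self_mem_nhdsWithin] with α hα
      have : 0 < α := hα
      exact Set.mem_Ioi.2 (by linarith)
  filter_upwards [t.eventually (halflim hm ha hb hε h1 h2)] with α h
  have e : ∀ n, Real.exp (-(2 * α * R n)) = Real.exp (-(α * R n)) ^ 2 := fun n => by
    rw [← Real.exp_nat_mul]; congr 1; push_cast; ring
  simp only [e] at h
  exact ⟨by linarith [h.1], h.2.1, by linarith [h.2.2]⟩

variable {κ : ℤ → ℝ}

/-- A function on `ℤ` glued from two half-lines. -/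
noncomputable def glue (p q : ℕ → ℝ) (x : ℤ) : ℝ := if 0 ≤ x then p x.toNat else q (-x - 1).toNat

lemma glue_nat (p q : ℕ → ℝ) (n : ℕ) : glue p q n = p n := by simp [glue]

lemma glue_neg (p q : ℕ → ℝ) (n : ℕ) : glue p q (-((n:ℤ)+1)) = q n := by
  rw [glue, if_neg (by omega)]
  congr 1
  omega

lemma lower_trial (hκ : ∀ x, 0 < κ x) {B m ε : ℝ} (hB : 0 < B) (hm : 0 < m) (hε : 0 < ε)
    (r1 : LinLo (fun n => 1 / κ n) B) (r2 : LinLo (fun n => 1 / κ (-((n:ℤ)+1))) B)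
    (c1 : LinUp (fun n => cbar κ n) m) (c2 : LinUp (fun n => cbar κ (-((n:ℤ)+1))) m) :
    ∀ᶠ α in nhdsWithin (0:ℝ) (Set.Ioi 0), ∀ z, 0 < z → z < 1 →
      1 ≤ (α + (1 - z) * (m / B + ε) / α) * resol κ z 0 := by
  set R : ℕ → ℝ := fun n => ∑ k ∈ Finset.range n, 1 / κ k with hR
  set Q : ℕ → ℝ := fun n => ∑ k ∈ Finset.range n, 1 / κ (-((k:ℤ)+1)) with hQ
  have r2' : ∀ b' < B, ∃ C, ∀ n : ℕ, b' * n - C ≤ Q (n+1) := fun b' hb' => by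
    obtain ⟨C, hC⟩ := r2 b' hb'
    refine ⟨C, fun n => (hC n).trans ?_⟩
    simp only [hQ, Finset.sum_range_succ]
    have := hκ (-((n:ℤ)+1))
    linarith [one_div_pos.2 this]
  have E1 := halflim_sq (R := R) (fun n => (cbar_pos hκ n).le) hm.le hB hε c1 r1
  have E2 := halflim_sq (R := fun n => Q (n+1)) (fun n => (cbar_pos hκ _).le) hm.le hB hε c2 r2'
  filter_upwards [E1, E2] with α h1 h2 z hz0 hz1
  obtain ⟨hα, s1, b1⟩ := h1
  obtain ⟨-, s2, b2⟩ := h2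
  obtain ⟨s3, b3⟩ := tele (r := fun n : ℕ => 1 / κ n) (fun n => one_div_pos.2 (hκ _)) hα
  obtain ⟨s4, b4⟩ := tele (r := fun n : ℕ => 1 / κ (-((n:ℤ)+1))) (fun n => one_div_pos.2 (hκ _)) hα
  set f : ℤ → ℝ := glue (fun n => Real.exp (-(α * R n))) (fun n => Real.exp (-(α * Q (n+1))))
  have f1 : ∀ n : ℕ, f n = Real.exp (-(α * R n)) := fun n => glue_nat _ _ n
  have f2 : ∀ n : ℕ, f (-((n:ℤ)+1)) = Real.exp (-(α * Q (n+1))) := fun n => glue_neg _ _ n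
  have f3 : ∀ n : ℕ, f ((n:ℤ)+1) = Real.exp (-(α * R (n+1))) := fun n => by
    rw [← f1]; norm_cast
  have f4 : ∀ n : ℕ, f (-((n:ℤ)+1)+1) = Real.exp (-(α * Q n)) := fun n => by
    cases n with
    | zero =>
      have : (-(((0:ℕ):ℤ)+1)+1) = ((0:ℕ):ℤ) := by norm_num
      rw [this, f1]; simp [hR, hQ]
    | succ n => rw [← f2]; congr 1
  have hRn : ∀ n, 0 ≤ R n := fun n => Finset.sum_nonneg fun k _ => (one_div_pos.2 (hκ _)).le
  have hQn : ∀ n, 0 ≤ Q n := fun n => Finset.sum_nonneg fun k _ => (one_div_pos.2 (hκ _)).le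
  have hfb : ∀ x, |f x| ≤ 1 := fun x => by
    have key : ∀ y, 0 ≤ y → |Real.exp (-(α * y))| ≤ 1 := fun y hy => by
      rw [abs_of_pos (Real.exp_pos _), Real.exp_le_one_iff]
      nlinarith
    rcases le_or_gt 0 x with hx | hx
    · obtain ⟨n, rfl⟩ := Int.eq_ofNat_of_zero_le hx
      exact (f1 n).symm ▸ key _ (hRn n)
    · obtain ⟨n, hn⟩ : ∃ n : ℕ, x = -((n:ℤ)+1) := ⟨(-x-1).toNat, by omega⟩
      rw [hn, f2]; exact key _ (hQn _)
  have H1 := (s3.hasSum.mul_left z).add (s1.hasSum.mul_left (1-z))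
  have H2 := (s4.hasSum.mul_left z).add (s2.hasSum.mul_left (1-z))
  have H := HasSum.of_nat_of_neg_add_one
    (f := fun x : ℤ => z * (κ x * (f (x+1) - f x) ^ 2) + (1 - z) * (cbar κ x * f x ^ 2))
    (H1.congr_fun fun n => by
      rw [f1, f3]
      simp only [hR]
      rw [div_div_eq_mul_div, div_one]; ring)
    (H2.congr_fun fun n => by
      rw [f2, f4]
      simp only [hQ]
      rw [div_div_eq_mul_div, div_one]; ring)
  have D := dirichlet hκ hz0 hz1 hfb (by
    have := f1 0
    simpa [hR] using this) H
  refine D.trans (mul_le_mul_of_nonneg_right ?_ (resol_pos hκ hz0 hz1).le)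
  have g1 : ∑' n : ℕ, cbar κ n * Real.exp (-(α * R n)) ^ 2 ≤ (m / B + ε) / 2 / α := by
    rw [le_div_iff₀ hα]; linarith
  have g2 : ∑' n : ℕ, cbar κ (-((n:ℤ)+1)) * Real.exp (-(α * Q (n+1))) ^ 2 ≤ (m / B + ε) / 2 / α := by
    rw [le_div_iff₀ hα]; linarith
  have hw : 0 < 1 - z := by linarith
  have k1 := mul_le_mul_of_nonneg_left g1 hw.le
  have k2 := mul_le_mul_of_nonneg_left g2 hw.le
  have k3 := mul_le_mul_of_nonneg_left b3 hz0.le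
  have k4 := mul_le_mul_of_nonneg_left b4 hz0.le
  have k5 : z * (α / 2) ≤ α / 2 := by nlinarith
  have k6 : (1 - z) * (m / B + ε) / α = (1 - z) * ((m / B + ε) / 2 / α)
    + (1 - z) * ((m / B + ε) / 2 / α) := by ring
  rw [k6]
  linarith

lemma upper_trial (hκ : ∀ x, 0 < κ x) {B m ε : ℝ} (hB : 0 < B) (hm : 0 < m) (hε : 0 < ε)
    (r1 : LinUp (fun n => 1 / κ n) B) (r2 : LinUp (fun n => 1 / κ (-((n:ℤ)+1))) B)
    (c1 : LinLo (fun n => cbar κ n) m) (c2 : LinLo (fun n => cbar κ (-((n:ℤ)+1))) m) :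
    ∀ᶠ β in nhdsWithin (0:ℝ) (Set.Ioi 0), ∀ z, 0 < z → z < 1 →
      resol κ z 0 ≤ (1 / z) * ((B / m + ε) / (4 * β)) + β / (4 * (1 - z)) := by
  have c1' : LinLo (fun n : ℕ => cbar κ ((n:ℤ)+1)) m := by
    have := c1.shift
    simpa using this
  set R : ℕ → ℝ := fun n => ∑ k ∈ Finset.range n, cbar κ ((k:ℤ)+1) with hR
  set Q : ℕ → ℝ := fun n => ∑ k ∈ Finset.range n, cbar κ (-((k:ℤ)+1)) with hQ
  have E1 := halflim_sq (R := R) (fun n => (one_div_pos.2 (hκ n)).le) hB.le hm hε r1 c1'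
  have E2 := halflim_sq (R := Q) (fun n => (one_div_pos.2 (hκ _)).le) hB.le hm hε r2 c2
  have one : ∀ a' > (1:ℝ), ∃ C, ∀ N : ℕ, ∑ k ∈ Finset.range N, (fun _ => (1:ℝ)) k ≤ a' * N + C :=
    fun a' ha' => ⟨0, fun N => by simp; nlinarith [Nat.cast_nonneg (α := ℝ) N]⟩
  have E3 := halflim (R := R) (fun n => zero_le_one) zero_le_one hm hε one c1'
  have E4 := halflim (R := Q) (fun n => zero_le_one) zero_le_one hm hε one c2
  filter_upwards [E1, E2, E3, E4] with β h1 h2 h3 h4 z hz0 hz1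
  obtain ⟨hβ, s1, b1⟩ := h1
  obtain ⟨-, s2, b2⟩ := h2
  have sR := h3.2.1
  have sQ := h4.2.1
  obtain ⟨s3, b3⟩ := tele (r := fun n : ℕ => cbar κ ((n:ℤ)+1)) (fun n => cbar_pos hκ _) hβ
  obtain ⟨s4, b4⟩ := tele (r := fun n : ℕ => cbar κ (-((n:ℤ)+1))) (fun n => cbar_pos hκ _) hβ
  set θ : ℤ → ℝ := glue (fun n => 1 / 2 * Real.exp (-(β * R n)))
    (fun n => -(1 / 2 * Real.exp (-(β * Q n)))) with hθd
  have f1 : ∀ n : ℕ, θ n = 1 / 2 * Real.exp (-(β * R n)) := fun n => glue_nat _ _ n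
  have f2 : ∀ n : ℕ, θ (-((n:ℤ)+1)) = -(1 / 2 * Real.exp (-(β * Q n))) := fun n => glue_neg _ _ n
  have f3 : ∀ n : ℕ, θ ((n:ℤ)+1) = 1 / 2 * Real.exp (-(β * R (n+1))) := fun n => by
    rw [← f1]; norm_cast
  have f4 : ∀ n : ℕ, θ (-((n:ℤ)+1)-1) = -(1 / 2 * Real.exp (-(β * Q (n+1)))) := fun n => by
    rw [← f2]; congr 1
  have sR' : Summable fun n : ℕ => θ n := by
    simp only [one_mul] at sR
    exact (sR.mul_left (1/2)).congr fun n => (f1 n).symm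
  have sQ' : Summable fun n : ℕ => θ (-((n:ℤ)+1)) := by
    simp only [one_mul] at sQ
    exact (sQ.mul_left (1/2)).neg.congr fun n => (f2 n).symm
  have hθ : Summable θ := (HasSum.of_nat_of_neg_add_one sR'.hasSum sQ'.hasSum).summable
  set k : ℤ → ℝ := fun x => (if x = 0 then 1 else 0) - θ x + θ (x-1) with hk
  have k0 : k 0 = 0 := by
    have e1 := f1 0
    have e2 := f2 0
    simp [hR, hQ] at e1 e2
    simp [hk, e1, e2]
    norm_num
  have k1 : ∀ n : ℕ, k ((n:ℤ)+1) = 1 / 2 * (Real.exp (-(β * R n)) - Real.exp (-(β * R (n+1)))) :=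
    fun n => by
    simp only [hk]
    rw [if_neg (by omega), add_sub_cancel_right, f1, f3]; ring
  have k2 : ∀ n : ℕ, k (-((n:ℤ)+1)) = 1 / 2 * (Real.exp (-(β * Q n)) - Real.exp (-(β * Q (n+1)))) :=
    fun n => by
    simp only [hk]
    rw [if_neg (by omega), f2, f4]; ring
  have K1 : HasSum (fun n : ℕ => k n ^ 2 / cbar κ n) (1 / 4 * ∑' n : ℕ,
      (Real.exp (-(β * R n)) - Real.exp (-(β * R (n+1)))) ^ 2 / cbar κ ((n:ℤ)+1)) := by
    have := (hasSum_nat_add_iff (f := fun n : ℕ => k n ^ 2 / cbar κ n) 1).1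
      ((s3.hasSum.mul_left (1/4)).congr_fun fun n => by
        push_cast
        rw [k1]; simp only [hR]; ring)
    refine HasSum.congr_val this ?_
    simp [k0, hR]
  have H1 := ((s1.hasSum.mul_left (1/4)).mul_left (1/z)).add (K1.mul_left (1/(1-z)))
  have H2 := ((s2.hasSum.mul_left (1/4)).mul_left (1/z)).add
    ((s4.hasSum.mul_left (1/4)).mul_left (1/(1-z)))
  have H := HasSum.of_nat_of_neg_add_one
    (f := fun x : ℤ => (1 / z) * ((1 / κ x) * θ x ^ 2)
      + (1 / (1 - z)) * (k x ^ 2 / cbar κ x))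
    (H1.congr_fun fun n => by rw [f1]; ring)
    (H2.congr_fun fun n => by
      rw [f2, k2]
      simp only [hQ]
      ring)
  have D := thomson hκ hz0 hz1 hθ (k := k) (fun x => rfl) H
  refine D.trans ?_
  have g1 : ∑' n : ℕ, 1 / κ n * Real.exp (-(β * R n)) ^ 2 ≤ (B / m + ε) / 2 / β := by
    rw [le_div_iff₀ hβ]; linarith
  have g2 : ∑' n : ℕ, 1 / κ (-((n:ℤ)+1)) * Real.exp (-(β * Q n)) ^ 2 ≤ (B / m + ε) / 2 / β := by
    rw [le_div_iff₀ hβ]; linarith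
  have hw : 0 < 1 / (1 - z) := one_div_pos.2 (by linarith)
  have hz : 0 < 1 / z := one_div_pos.2 hz0
  have i1 := mul_le_mul_of_nonneg_left g1 hz.le
  have i2 := mul_le_mul_of_nonneg_left g2 hz.le
  have i3 := mul_le_mul_of_nonneg_left b3 hw.le
  have i4 := mul_le_mul_of_nonneg_left b4 hw.le
  have e1 : (1 / z) * ((B / m + ε) / (4 * β)) + β / (4 * (1 - z))
    = 1 / 4 * (1 / z * ((B / m + ε) / 2 / β) + 1 / z * ((B / m + ε) / 2 / β)
      + 1 / (1 - z) * (β / 2) + 1 / (1 - z) * (β / 2)) := by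
    generalize B / m + ε = E
    have : (1 - z) ≠ 0 := by linarith
    field_simp
    ring
  rw [e1]
  simp only [← hR, ← hQ] at *
  linarith

end bounds

section limit

variable {κ : ℤ → ℝ}

lemma sqrt_scale_tendsto {ρ : ℝ} (hρ : 0 < ρ) :
    Tendsto (fun z : ℝ => √(1 - z) * ρ) (nhdsWithin 1 (Set.Iio 1)) (nhdsWithin 0 (Set.Ioi 0)) := by
  refine tendsto_nhdsWithin_iff.2 ⟨?_, ?_⟩
  · have : Continuous (fun z : ℝ => √(1 - z) * ρ) := by fun_prop
    have := this.tendsto 1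
    simp at this
    exact this.mono_left nhdsWithin_le_nhds
  · filter_upwards [self_mem_nhdsWithin] with z hz
    have : z < 1 := hz
    exact mul_pos (Real.sqrt_pos.2 (by linarith)) hρ

lemma resol_limit (hκ : ∀ x, 0 < κ x) {B m : ℝ} (hB : 0 < B) (hm : 0 < m)
    (r1 : LinUp (fun n => 1 / κ n) B) (r2 : LinUp (fun n => 1 / κ (-((n:ℤ)+1))) B)
    (c1 : LinUp (fun n => cbar κ n) m) (c2 : LinUp (fun n => cbar κ (-((n:ℤ)+1))) m)
    (r1' : LinLo (fun n => 1 / κ n) B) (r2' : LinLo (fun n => 1 / κ (-((n:ℤ)+1))) B)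
    (c1' : LinLo (fun n => cbar κ n) m) (c2' : LinLo (fun n => cbar κ (-((n:ℤ)+1))) m) :
    Tendsto (fun z => √(1 - z) * resol κ z 0) (nhdsWithin 1 (Set.Iio 1))
      (nhds (√(B / m) / 2)) := by
  have hBm : 0 < B / m := div_pos hB hm
  have hmB : 0 < m / B := div_pos hm hB
  set τ := √(B / m) with hτd
  have hτ : 0 < τ := Real.sqrt_pos.2 hBm
  have hτ2 : τ ^ 2 = B / m := Real.sq_sqrt hBm.le
  set ρ := √(m / B) with hρd
  have hρ : 0 < ρ := Real.sqrt_pos.2 hmB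
  have hρ2 : ρ ^ 2 = m / B := Real.sq_sqrt hmB.le
  have hρτ : ρ * τ = 1 := by
    rw [hρd, hτd, ← Real.sqrt_mul hmB.le, div_mul_div_cancel₀ hB.ne', div_self hm.ne', Real.sqrt_one]
  have hz0 : ∀ᶠ z : ℝ in nhdsWithin 1 (Set.Iio 1), 0 < z :=
    (lt_mem_nhds one_pos).filter_mono nhdsWithin_le_nhds
  refine tendsto_order.2 ⟨fun l hl => ?_, fun u hu => ?_⟩
  · have t : ContinuousAt (fun ε : ℝ => 1 / (2 * ρ + ε / ρ)) 0 := by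
      refine ContinuousAt.div (by fun_prop) (by fun_prop) ?_
      simpa using hρ.ne'
    have e0 : 1 / (2 * ρ + 0 / ρ) = τ / 2 := by
      rw [zero_div, add_zero, div_eq_div_iff (by positivity) (by norm_num)]
      linarith
    have t1 := t.eventually_const_lt (u := l) (e0.symm ▸ hl : l < 1 / (2 * ρ + 0 / ρ))
    obtain ⟨ε, hε1, hε⟩ := ((t1.filter_mono (nhdsWithin_le_nhds (s := Set.Ioi 0))).and
      self_mem_nhdsWithin).exists
    have hε : 0 < ε := hε
    have E := (sqrt_scale_tendsto hρ).eventually (lower_trial hκ hB hm hε r1' r2' c1 c2)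
    filter_upwards [E, hz0, self_mem_nhdsWithin] with z h h0 h1
    have h1 : z < 1 := h1
    have := h z h0 h1
    have hw : 0 < 1 - z := by linarith
    have hs : 0 < √(1 - z) := Real.sqrt_pos.2 hw
    have hs2 : √(1 - z) ^ 2 = 1 - z := Real.sq_sqrt hw.le
    refine hε1.trans_le ?_
    rw [div_le_iff₀ (by positivity)]
    refine this.trans (le_of_eq ?_)
    rw [← hρ2]
    nth_rewrite 2 [← hs2]
    field_simp
    ring
  · have t : ContinuousAt (fun ε : ℝ => (1 + ε) * ((τ ^ 2 + ε) / (4 * τ)) + τ / 4) 0 := by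
      fun_prop
    have e0 : (1 + 0) * ((τ ^ 2 + 0) / (4 * τ)) + τ / 4 = τ / 2 := by
      field_simp
      ring
    have t1 := t.eventually_lt_const (u := u) (e0.symm ▸ hu : (1 + 0) * ((τ ^ 2 + 0) / (4 * τ)) + τ / 4 < u)
    obtain ⟨ε, hε1, hε⟩ := ((t1.filter_mono (nhdsWithin_le_nhds (s := Set.Ioi 0))).and
      self_mem_nhdsWithin).exists
    have hε : 0 < ε := hε
    have E := (sqrt_scale_tendsto hτ).eventually (upper_trial hκ hB hm hε r1 r2 c1' c2')
    have hz1 : ∀ᶠ z : ℝ in nhdsWithin 1 (Set.Iio 1), 1 / z < 1 + ε := by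
      have t : ContinuousAt (fun z : ℝ => 1 / z) 1 :=
        ContinuousAt.div (by fun_prop) (by fun_prop) one_ne_zero
      exact (t.eventually_lt_const (by simpa using hε)).filter_mono nhdsWithin_le_nhds
    filter_upwards [E, hz0, self_mem_nhdsWithin, hz1] with z h h0 h1 h2
    have h1 : z < 1 := h1
    have := h z h0 h1
    have hw : 0 < 1 - z := by linarith
    have hs : 0 < √(1 - z) := Real.sqrt_pos.2 hw
    have hs2 : √(1 - z) ^ 2 = 1 - z := Real.sq_sqrt hw.le
    refine lt_of_le_of_lt ?_ hε1
    have i1 := mul_le_mul_of_nonneg_left this hs.le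
    have e1 : √(1 - z) * (1 / z * ((B / m + ε) / (4 * (√(1 - z) * τ))) + √(1 - z) * τ / (4 * (1 - z)))
      = 1 / z * ((τ ^ 2 + ε) / (4 * τ)) + τ / 4 := by
      rw [← hτ2]
      nth_rewrite 4 [← hs2]
      field_simp
    rw [e1] at i1
    refine i1.trans ?_
    have : 0 ≤ (τ ^ 2 + ε) / (4 * τ) := by positivity
    have := mul_le_mul_of_nonneg_right h2.le this
    linarith

/-- Deterministic local limit theorem: linear averages imply the limit. -/
lemma llt_det (hκ : ∀ x, 0 < κ x) {B m : ℝ} (hB : 0 < B) (hm : 0 < m)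
    (r1 : LinUp (fun n => 1 / κ n) B) (r2 : LinUp (fun n => 1 / κ (-((n:ℤ)+1))) B)
    (c1 : LinUp (fun n => cbar κ n) m) (c2 : LinUp (fun n => cbar κ (-((n:ℤ)+1))) m)
    (r1' : LinLo (fun n => 1 / κ n) B) (r2' : LinLo (fun n => 1 / κ (-((n:ℤ)+1))) B)
    (c1' : LinLo (fun n => cbar κ n) m) (c2' : LinLo (fun n => cbar κ (-((n:ℤ)+1))) m)
    (x : ℤ) (hx : Even x) :
    Tendsto (fun n : ℕ => √(2 * n) * walk κ (2 * n) 0 x) atTop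
      (nhds (cbar κ x / √Real.pi * √(B / m))) := by
  have R := resol_limit hκ hB hm r1 r2 c1 c2 r1' r2' c1' c2'
  have ts : Tendsto (fun s : ℝ => √s) (nhdsWithin 1 (Set.Iio 1)) (nhdsWithin 1 (Set.Iio 1)) := by
    refine tendsto_nhdsWithin_iff.2 ⟨?_, ?_⟩
    · have := Real.continuous_sqrt.tendsto 1
      rw [Real.sqrt_one] at this
      exact this.mono_left nhdsWithin_le_nhds
    · filter_upwards [self_mem_nhdsWithin] with s hs
      have : s < 1 := hs
      exact Set.mem_Iio.2 ((Real.sqrt_lt' one_pos).2 (by simpa using this))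
  have t1 : Tendsto (fun s : ℝ => √(1 + √s)) (nhdsWithin 1 (Set.Iio 1)) (nhds √2) := by
    have : Continuous (fun s : ℝ => √(1 + √s)) := by fun_prop
    have := this.tendsto 1
    rw [Real.sqrt_one, one_add_one_eq_two] at this
    exact this.mono_left nhdsWithin_le_nhds
  have t2 := t1.mul (R.comp ts)
  have t3 : Tendsto (fun s : ℝ => √(1 - s) * ∑' n, heatK κ (2 * n) 0 * s ^ n)
      (nhdsWithin 1 (Set.Iio 1)) (nhds (√2 * (√(B / m) / 2))) := by
    refine t2.congr' ?_
    have hz0 : ∀ᶠ z : ℝ in nhdsWithin 1 (Set.Iio 1), 0 < z :=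
      (lt_mem_nhds one_pos).filter_mono nhdsWithin_le_nhds
    filter_upwards [hz0, self_mem_nhdsWithin] with s h0 h1
    have h1 : s < 1 := h1
    have q0 : 0 < √s := Real.sqrt_pos.2 h0
    have q1 : √s < 1 := (Real.sqrt_lt' one_pos).2 (by simpa using h1)
    have q2 : √s ^ 2 = s := Real.sq_sqrt h0.le
    simp only [Function.comp_apply]
    rw [resol_zero hκ q0 q1, q2, ← mul_assoc, ← Real.sqrt_mul (by linarith)]
    congr 3
    nlinarith
  have t4 := tauberian (fun n => hk_nonneg hκ (2 * n) 0) (hk_antitone hκ) (by positivity) t3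
  have t5 := (hk_offdiag hκ t4 x hx).const_mul (cbar κ x)
  have e : cbar κ x * (√2 * (√2 * (√(B / m) / 2) / √Real.pi))
      = cbar κ x / √Real.pi * √(B / m) := by
    have : √2 * √2 = (2:ℝ) := Real.mul_self_sqrt (by norm_num)
    calc _ = cbar κ x * (√2 * √2) * (√(B / m) / 2) / √Real.pi := by ring
      _ = _ := by rw [this]; ring
  rw [e] at t5
  refine t5.congr fun n => ?_
  have := (cbar_pos hκ x).ne'
  unfold heatK
  field_simp

end limit


section ergodicAux

variable {Ω : Type*} [MeasurableSpace Ω] {μ : Measure Ω}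

lemma ergodic_symm {T : Equiv.Perm Ω} (hT : Ergodic T μ) (hS : MeasurePreserving T.symm μ μ) :
    Ergodic T.symm μ := by
  refine ⟨hS, ⟨fun s hs h => ?_⟩⟩
  refine hT.toPreErgodic.aeconst_set hs ?_
  ext x
  have := Set.ext_iff.1 h (T x)
  simp only [Set.mem_preimage, Equiv.symm_apply_apply] at this
  exact this.symm

lemma integral_comp_mp {S : Ω → Ω} (hS : MeasurePreserving S μ μ) {f : Ω → ℝ}
    (hf : AEStronglyMeasurable f μ) : ∫ ω, f (S ω) ∂μ = ∫ ω, f ω ∂μ := by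
  have h := integral_map (μ := μ) (φ := S) (f := f) hS.aemeasurable (by rwa [hS.map_eq])
  rw [hS.map_eq] at h
  exact h.symm

lemma integral_pos_of_pos [IsProbabilityMeasure μ] {f : Ω → ℝ} (hf : Integrable f μ)
    (h : ∀ ω, 0 < f ω) : 0 < ∫ ω, f ω ∂μ := by
  rw [integral_pos_iff_support_of_nonneg (fun ω => (h ω).le) hf]
  have : Function.support f = Set.univ := Set.eq_univ_of_forall fun ω => (h ω).ne'
  rw [this, measure_univ]
  exact one_pos

lemma ergodic_lin [IsProbabilityMeasure μ] {S : Ω → Ω} (hS : Ergodic S μ) {f : Ω → ℝ}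
    (hfm : Measurable f) (hf : Integrable f μ) :
    ∀ᵐ x ∂μ, LinUp (fun k => f (S^[k] x)) (∫ x, f x ∂μ) ∧
      LinLo (fun k => f (S^[k] x)) (∫ x, f x ∂μ) := by
  filter_upwards [ergodic_upper hS hfm hf, ergodic_upper hS hfm.neg hf.neg] with x h1 h2
  refine ⟨h1, fun a' ha' => ?_⟩
  obtain ⟨C, hC⟩ := h2 (-a') (by simp only [Pi.neg_apply, integral_neg]; linarith)
  refine ⟨C, fun N => ?_⟩
  have := hC N
  simp only [Pi.neg_apply, Finset.sum_neg_distrib] at this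
  linarith

end ergodicAux

/-- Local limit theorem in dimension one, stationary environment of conductances:
if `1/c` and `c̄ = c∘T⁻¹ + c` are integrable then, for a.e. environment `ω` and
every even `x₀`,
`√(2n)·P_0^ω[S_{2n} = x₀] → (c̄(x₀)(ω)/√π)·√(∫(1/c)dμ / ∫c̄ dμ)`. -/
theorem local_limit_theorem_conductances {Ω : Type*} [MeasurableSpace Ω]
    (μ : Measure Ω) [IsProbabilityMeasure μ]
    (T : Equiv.Perm Ω) (hT : Ergodic T μ)
    (hTsymm : MeasurePreserving T.symm μ μ)
    (c : Ω → ℝ) (hc : Measurable c) (hcpos : ∀ ω, 0 < c ω)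
    (hres : Integrable (fun ω => 1 / c ω) μ)
    (hcbar : Integrable (fun ω => c (T.symm ω) + c ω) μ) :
    ∀ᵐ ω ∂μ, ∀ x₀ : ℤ, Even x₀ →
      Tendsto (fun n : ℕ => Real.sqrt (2 * n) * walk (envC T c ω) (2 * n) 0 x₀)
        atTop
        (nhds ((cbar (envC T c ω) x₀ / Real.sqrt Real.pi) *
          Real.sqrt ((∫ ω, 1 / c ω ∂μ) / (∫ ω, (c (T.symm ω) + c ω) ∂μ)))) := by
  have hTm : Measurable T := hT.toMeasurePreserving.measurable
  have hSm : Measurable T.symm := hTsymm.measurable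
  have hS : Ergodic T.symm μ := ergodic_symm hT hTsymm
  have f1m : Measurable (fun ω => 1 / c ω) := measurable_const.div hc
  have g1m : Measurable (fun ω => c (T.symm ω) + c ω) := (hc.comp hSm).add hc
  have f2i : Integrable (fun ω => 1 / c (T.symm ω)) μ :=
    (hTsymm.integrable_comp hres.aestronglyMeasurable).2 hres
  have g2i : Integrable (fun ω => c (T.symm (T.symm ω)) + c (T.symm ω)) μ :=
    (hTsymm.integrable_comp hcbar.aestronglyMeasurable).2 hcbar
  have f2e : ∫ ω, 1 / c (T.symm ω) ∂μ = ∫ ω, 1 / c ω ∂μ :=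
    integral_comp_mp hTsymm hres.aestronglyMeasurable
  have g2e : ∫ ω, (c (T.symm (T.symm ω)) + c (T.symm ω)) ∂μ = ∫ ω, (c (T.symm ω) + c ω) ∂μ :=
    integral_comp_mp hTsymm hcbar.aestronglyMeasurable
  have hB : 0 < ∫ ω, 1 / c ω ∂μ := integral_pos_of_pos hres fun ω => one_div_pos.2 (hcpos ω)
  have hm : 0 < ∫ ω, (c (T.symm ω) + c ω) ∂μ :=
    integral_pos_of_pos hcbar fun ω => add_pos (hcpos _) (hcpos _)
  have A1 := ergodic_lin hT f1m hres
  have A2 := ergodic_lin hS (f1m.comp hSm) f2i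
  have A3 := ergodic_lin hT g1m hcbar
  have A4 := ergodic_lin hS (g1m.comp hSm) g2i
  simp only [Function.comp_apply] at A2 A4
  rw [f2e] at A2
  rw [g2e] at A4
  filter_upwards [A1, A2, A3, A4] with ω a1 a2 a3 a4 x₀ hx₀
  have p1 : ∀ n : ℕ, (T ^ (n:ℤ)) ω = T^[n] ω := fun n => by
    rw [zpow_natCast, Equiv.Perm.iterate_eq_pow]
  have p2 : ∀ n : ℕ, (T ^ (-((n:ℤ)+1))) ω = T.symm (T.symm^[n] ω) := fun n => by
    have : (-((n:ℤ)+1)) = -(((n+1 : ℕ)) : ℤ) := by push_cast; ring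
    rw [this, zpow_neg, zpow_natCast, ← inv_pow, ← Function.iterate_succ_apply' (⇑T.symm) n ω,
      ← Equiv.Perm.iterate_eq_pow]
    rfl
  have p3 : ∀ x : ℤ, cbar (envC T c ω) x = c (T.symm ((T ^ x) ω)) + c ((T ^ x) ω) := fun x => by
    have : (T ^ (x - 1)) ω = T.symm ((T ^ x) ω) := by
      rw [sub_eq_add_neg, add_comm, zpow_add, zpow_neg_one]; rfl
    simp only [cbar, envC, this]
  have e1 : (fun n : ℕ => 1 / envC T c ω n) = fun n => 1 / c (T^[n] ω) :=
    funext fun n => by simp only [envC, p1]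
  have e2 : (fun n : ℕ => 1 / envC T c ω (-((n:ℤ)+1))) = fun n => 1 / c (T.symm (T.symm^[n] ω)) :=
    funext fun n => by simp only [envC, p2]
  have e3 : (fun n : ℕ => cbar (envC T c ω) n) = fun n => c (T.symm (T^[n] ω)) + c (T^[n] ω) :=
    funext fun n => by simp only [p3, p1]
  have e4 : (fun n : ℕ => cbar (envC T c ω) (-((n:ℤ)+1)))
      = fun n => c (T.symm (T.symm (T.symm^[n] ω))) + c (T.symm (T.symm^[n] ω)) :=
    funext fun n => by simp only [p3, p2]
  rw [← e1] at a1
  rw [← e2] at a2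
  rw [← e3] at a3
  rw [← e4] at a4
  exact llt_det (κ := envC T c ω) (fun x => hcpos _) hB hm a1.1 a2.1 a3.1 a4.1 a1.2 a2.2 a3.2 a4.2 x₀ hx₀
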